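/- (Gabriel's Theorem, part 1) Let k be an algebraically closed field. A finite connected quiver Q has only finitely many isomorphism classes of indecomposable finite-dimensional representations over k if and only if its underlying undirected graph is a Dynkin graph of type A_n (n≥1), D_n (n≥4), E_6, E_7, or E_8. More generally, an arbitrary finite quiver is of finite representation type if and only if its underlying graph is a disjoint union of Dynkin graphs of type A, D, or E. -/

import Mathlib

/-! Statement 9 (Gabriel's theorem, part 1): a finite connected quiver has finite
representation type over an algebraically closed field iff its underlying graph is a
Dynkin graph of type A, D or E; an arbitrary finite quiver has finite representation
type iff its underlying graph is a disjoint union of such Dynkin graphs. -/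

/-- A finite-dimensional representation of the quiver `(I, E, s, t)` over the field `k`:
a finite-dimensional `k`-vector space `V i` for each vertex `i` and a `k`-linear map
`f e : V (s e) → V (t e)` for each arrow `e`. -/
structure QRep (k : Type) [Field k] (I E : Type) (s t : E → I) where
  V : I → Type
  [acg : ∀ i, AddCommGroup (V i)]
  [mod : ∀ i, Module k (V i)]
  [fd : ∀ i, FiniteDimensional k (V i)]
  f : ∀ e : E, V (s e) →ₗ[k] V (t e)

attribute [instance] QRep.acg QRep.mod QRep.fd

namespace QRep

variable {k : Type} [Field k] {I E : Type} {s t : E → I}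

/-- Isomorphism of quiver representations: a collection of linear equivalences commuting
with the structure maps. -/
def Iso (M N : QRep k I E s t) : Prop :=
  ∃ φ : ∀ i, M.V i ≃ₗ[k] N.V i,
    ∀ (e : E) (v : M.V (s e)), φ (t e) (M.f e v) = N.f e (φ (s e) v)

/-- Direct sum of two quiver representations, defined vertexwise and arrowwise. -/
def dsum (M N : QRep k I E s t) : QRep k I E s t where
  V i := M.V i × N.V i
  f e := (M.f e).prodMap (N.f e)

/-- The trivial (zero) representation. -/
def zero (k : Type) [Field k] (I E : Type) (s t : E → I) : QRep k I E s t where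
  V _ := PUnit
  f _ := 0

/-- A representation is trivial if all its vector spaces are zero. -/
def IsTrivial (M : QRep k I E s t) : Prop := ∀ i, Subsingleton (M.V i)

/-- A representation is indecomposable if it is nontrivial and not isomorphic to a direct
sum of two nontrivial representations. -/
def Indecomposable (M : QRep k I E s t) : Prop :=
  ¬ M.IsTrivial ∧
    ∀ A B : QRep k I E s t, ¬ A.IsTrivial → ¬ B.IsTrivial → ¬ M.Iso (A.dsum B)

/-- Finite direct sums of quiver representations. -/
def dsumFin : (n : ℕ) → (Fin n → QRep k I E s t) → QRep k I E s t
  | 0, _ => zero k I E s t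
  | n + 1, F => (F 0).dsum (dsumFin n fun a => F a.succ)

/-- The dimension vector of a representation. -/
noncomputable def dimVec (M : QRep k I E s t) : I → ℕ := fun i => Module.finrank k (M.V i)

end QRep

/-- Number of edges of the path `0 — 1 — ⋯ — m` between the vertices `i` and `j`. -/
def segCount (m i j : ℕ) : ℕ :=
  if (i + 1 = j ∧ j ≤ m) ∨ (j + 1 = i ∧ i ≤ m) then 1 else 0

/-- Indicator of a single (undirected) edge between vertices `a` and `b`. -/
def edgeInd (a b i j : ℕ) : ℕ :=
  if (i = a ∧ j = b) ∨ (i = b ∧ j = a) then 1 else 0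

/-- Edge multiplicities of the Dynkin graph `A_n`: the path on `n` vertices. -/
def aCount (n : ℕ) (i j : Fin n) : ℕ := segCount (n - 1) i j

/-- Edge multiplicities of the Dynkin graph `D_n` (`n ≥ 4`): the path on the `n - 1`
vertices `0, …, n-2` with the extra vertex `n-1` attached to vertex `1`. -/
def dCount (n : ℕ) (i j : Fin n) : ℕ := segCount (n - 2) i j + edgeInd 1 (n - 1) i j

/-- Edge multiplicities of the Dynkin graph `E_n` (`n = 6, 7, 8`): the path on the `n - 1`
vertices `0, …, n-2` with the extra vertex `n-1` attached to vertex `2`. -/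
def eCount (n : ℕ) (i j : Fin n) : ℕ := segCount (n - 2) i j + edgeInd 2 (n - 1) i j

/-- Isomorphism of undirected multigraphs described by their edge-multiplicity functions. -/
def IsGraphIso {α β : Type} (c : α → α → ℕ) (d : β → β → ℕ) : Prop :=
  ∃ e : α ≃ β, ∀ i j, c i j = d (e i) (e j)

/-- The multigraph `c` is a Dynkin graph of type `A`, `D` or `E`. -/
def IsADE {α : Type} (c : α → α → ℕ) : Prop :=
  (∃ n : ℕ, 1 ≤ n ∧ IsGraphIso c (aCount n)) ∨
  (∃ n : ℕ, 4 ≤ n ∧ IsGraphIso c (dCount n)) ∨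
  (∃ n : ℕ, (n = 6 ∨ n = 7 ∨ n = 8) ∧ IsGraphIso c (eCount n))

/-- Edge multiplicities of the underlying undirected graph of the quiver `(I, E, s, t)`:
the number of arrows between `i` and `j` in either direction. -/
noncomputable def quivCount {I E : Type} (s t : E → I) (i j : I) : ℕ :=
  Nat.card {e : E // (s e = i ∧ t e = j) ∨ (s e = j ∧ t e = i)}

/-- The underlying graph of `c` is a disjoint union of Dynkin graphs of type `A`, `D`, `E`:
the vertices can be partitioned so that all edges stay within one part and each part is a
Dynkin graph of type `A`, `D`, or `E`. -/
def IsDisjUnionADE {I : Type} (c : I → I → ℕ) : Prop :=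
  ∃ (σ : Type) (part : I → σ),
    (∀ i j, c i j ≠ 0 → part i = part j) ∧
    ∀ s0 : σ, IsADE (fun i j : {x : I // part x = s0} => c i.1 j.1)

/-- A quiver has finite representation type over `k` if it has only finitely many
isomorphism classes of indecomposable (finite-dimensional) representations. -/
def FiniteRepType (k : Type) [Field k] (I E : Type) (s t : E → I) : Prop :=
  ∃ (n : ℕ) (F : Fin n → QRep k I E s t),
    ∀ M : QRep k I E s t, M.Indecomposable → ∃ a, M.Iso (F a)

/-- The underlying graph of the quiver `(I, E, s, t)` is connected. -/
def QuivConnected (I E : Type) (s t : E → I) : Prop :=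
  Nonempty I ∧ ∀ i j : I,
    Relation.ReflTransGen (fun a b => ∃ e : E, (s e = a ∧ t e = b) ∨ (s e = b ∧ t e = a)) i j

/-!
Let `q(d) = ∑ i, d i ^ 2 - ∑ e, d (s e) * d (t e)` be the Tits form of the quiver. Both finite type
and the Dynkin condition are equivalent to `q` being positive on nonzero dimension vectors.

Suppose `q` is positive. By Ringel's lemma an indecomposable representation with a nonzero
noninjective endomorphism has a proper indecomposable subrepresentation with self-extensions. By
induction on the dimension there is none, so `End(M)` is a division algebra for every
indecomposable `M`. Its dimension `r` divides the dimension vector of `M`, whence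
`r² ≤ q(dim M) = r - dim Ext¹(M, M) ≤ r`; therefore `M` is rigid and `q(dim M) = 1`. Two rigid
representations on the same spaces are isomorphic, because each of them is isomorphic to all but
finitely many points of the line joining them. For a Dynkin graph `q` is even coercive, so that only
finitely many dimension vectors satisfy `q = 1`.

Conversely, for a quiver of finite type the group `∏ i, GL (d i)` has finitely many orbits on the
space of representations of dimension vector `d`, of dimension `∑ e, d (s e) * d (t e)`. As the
scalars act trivially, comparing transcendence degrees gives `q(d) ≥ 1`.

Finally, a connected graph with positive form is Dynkin by induction on the number of vertices:
remove a vertex that does not disconnect the graph and evaluate the form at the highest root of the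
rest, extended by `1`. Positivity forces the removed vertex to be attached by a single edge to a
vertex of coefficient `1`, which leaves few graphs to inspect.
-/

/-! ### Homomorphisms and subrepresentations -/

section LinearAlgebra

variable {k V W U : Type*} [Field k] [AddCommGroup V] [Module k V] [AddCommGroup W] [Module k W]
  [AddCommGroup U] [Module k U]

theorem exists_comp_eq_of_ker_le_ker {β : V →ₗ[k] W} {η : V →ₗ[k] U}
    (h : LinearMap.ker β ≤ LinearMap.ker η) : ∃ γ : W →ₗ[k] U, γ ∘ₗ β = η := by
  obtain ⟨γ, hγ⟩ := LinearMap.exists_extend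
    ((LinearMap.ker β).liftQ η h ∘ₗ β.quotKerEquivRange.symm.toLinearMap)
  refine ⟨γ, LinearMap.ext fun v => ?_⟩
  have hv : γ (β v) = (LinearMap.ker β).liftQ η h (β.quotKerEquivRange.symm (β.rangeRestrict v)) :=
    LinearMap.congr_fun hγ (β.rangeRestrict v)
  have hsymm : β.quotKerEquivRange.symm (β.rangeRestrict v) = (LinearMap.ker β).mkQ v :=
    (LinearEquiv.symm_apply_eq _).2 rfl
  rw [LinearMap.comp_apply, hv, hsymm, Submodule.mkQ_apply, Submodule.liftQ_apply]

theorem exists_retraction_of_disjoint {p q : Submodule k V} (h : Disjoint p q) :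
    ∃ ρ : V →ₗ[k] p, (∀ a : p, ρ a = a) ∧ q ≤ LinearMap.ker ρ := by
  obtain ⟨q', hq, hc⟩ := h.symm.exists_isCompl
  exact ⟨Submodule.projectionOnto _ _ hc.symm, Submodule.projectionOnto_apply_left _,
    fun b hb => (Submodule.projectionOnto_apply_eq_zero_iff _).2 (hq hb)⟩

end LinearAlgebra

instance instIsModularLatticeForall {ι : Type*} {α : ι → Type*} [∀ i, Lattice (α i)]
    [∀ i, IsModularLattice (α i)] : IsModularLattice (∀ i, α i) :=
  ⟨fun y _ hxz i => sup_inf_le_assoc_of_le (y i) (hxz i)⟩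

instance instWellFoundedGTForall {ι : Type*} [Finite ι] {α : ι → Type*} [∀ i, PartialOrder (α i)]
    [∀ i, WellFoundedGT (α i)] : WellFoundedGT (∀ i, α i) :=
  ⟨(inferInstance : WellFoundedLT (∀ i, (α i)ᵒᵈ)).wf⟩

namespace QRep

variable {k : Type} [Field k] {I E : Type} {s t : E → I} {M N P : QRep k I E s t}

theorem Iso.symm (h : M.Iso N) : N.Iso M := by
  obtain ⟨φ, hφ⟩ := h
  refine ⟨fun i => (φ i).symm, fun e v => ?_⟩
  rw [LinearEquiv.symm_apply_eq, hφ, LinearEquiv.apply_symm_apply]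

theorem Iso.trans (h : M.Iso N) (h' : N.Iso P) : M.Iso P := by
  obtain ⟨φ, hφ⟩ := h
  obtain ⟨ψ, hψ⟩ := h'
  refine ⟨fun i => (φ i).trans (ψ i), fun e v => ?_⟩
  simp only [LinearEquiv.trans_apply, hφ, hψ]

theorem Indecomposable.of_iso (hM : M.Indecomposable) (h : M.Iso N) : N.Indecomposable := by
  refine ⟨fun hN => hM.1 fun i => ?_, fun A B hA hB hAB => hM.2 A B hA hB (h.trans hAB)⟩
  obtain ⟨φ, -⟩ := h
  have := hN i
  exact (φ i).toEquiv.subsingleton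

/-- The failure of a family of linear maps `φ i : M.V i → N.V i` to commute with the arrows.
Its kernel is `Hom(M, N)` and its cokernel is `Ext¹(M, N)`. -/
def defect (M N : QRep k I E s t) :
    (∀ i, M.V i →ₗ[k] N.V i) →ₗ[k] ∀ e, M.V (s e) →ₗ[k] N.V (t e) where
  toFun φ e := φ (t e) ∘ₗ M.f e - N.f e ∘ₗ φ (s e)
  map_add' φ ψ := by
    funext e
    simp only [Pi.add_apply, LinearMap.add_comp, LinearMap.comp_add]
    abel
  map_smul' a φ := by
    funext e
    simp only [Pi.smul_apply, LinearMap.smul_comp, LinearMap.comp_smul, smul_sub, RingHom.id_apply]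

theorem defect_apply (φ : ∀ i, M.V i →ₗ[k] N.V i) (e : E) (v : M.V (s e)) :
    defect M N φ e v = φ (t e) (M.f e v) - N.f e (φ (s e) v) := rfl

theorem defect_eq_zero_iff {φ : ∀ i, M.V i →ₗ[k] N.V i} :
    defect M N φ = 0 ↔ ∀ e v, φ (t e) (M.f e v) = N.f e (φ (s e) v) := by
  simp only [funext_iff, LinearMap.ext_iff, defect_apply, Pi.zero_apply, LinearMap.zero_apply,
    sub_eq_zero]

/-- The endomorphism algebra of `M`, inside the product of the endomorphism algebras of the spaces
of `M`. -/
def endAlgebra (M : QRep k I E s t) : Subalgebra k (∀ i, Module.End k (M.V i)) where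
  carrier := {φ | ∀ e v, φ (t e) (M.f e v) = M.f e (φ (s e) v)}
  mul_mem' {φ ψ} hφ hψ e v := by
    simp only [Pi.mul_apply, Module.End.mul_apply, hψ e v, hφ e (ψ (s e) v)]
  add_mem' {φ ψ} hφ hψ e v := by
    simp only [Pi.add_apply, LinearMap.add_apply, hφ e v, hψ e v, map_add]
  algebraMap_mem' a e v := by
    simp only [Pi.algebraMap_apply, Module.algebraMap_end_apply, map_smul]

/-- A family of subspaces stable under the arrows. Such families are compared and combined in the
lattice `∀ i, Submodule k (M.V i)`. -/
def IsSubrep (M : QRep k I E s t) (U : ∀ i, Submodule k (M.V i)) : Prop :=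
  ∀ e, ∀ v ∈ U (s e), M.f e v ∈ U (t e)

/-- The representation carried by a stable family of subspaces. -/
abbrev subrep (M : QRep k I E s t) (U : ∀ i, Submodule k (M.V i)) (hU : M.IsSubrep U) :
    QRep k I E s t where
  V i := U i
  f e := (M.f e).restrict (hU e)

theorem IsSubrep.bot : M.IsSubrep ⊥ := by
  intro e v hv
  rw [(Submodule.mem_bot k).1 hv, map_zero]
  exact zero_mem _

theorem IsSubrep.sup {U W : ∀ i, Submodule k (M.V i)} (hU : M.IsSubrep U) (hW : M.IsSubrep W) :
    M.IsSubrep (U ⊔ W) := by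
  intro e v hv
  obtain ⟨u, hu, w, hw, rfl⟩ := Submodule.mem_sup.1 hv
  rw [map_add]
  exact Submodule.add_mem_sup (hU e u hu) (hW e w hw)

theorem not_isTrivial_subrep_iff {U : ∀ i, Submodule k (M.V i)} (hU : M.IsSubrep U) :
    ¬ (M.subrep U hU).IsTrivial ↔ U ≠ ⊥ := by
  simp only [IsTrivial, Submodule.subsingleton_iff_eq_bot, ne_eq, funext_iff, Pi.bot_apply]

/-- The vertexwise kernel of a family of linear maps. -/
def kerFamily (φ : ∀ i, M.V i →ₗ[k] N.V i) (i : I) : Submodule k (M.V i) := LinearMap.ker (φ i)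

/-- The vertexwise range of a family of linear maps. -/
def rangeFamily (φ : ∀ i, M.V i →ₗ[k] N.V i) (i : I) : Submodule k (N.V i) := LinearMap.range (φ i)

theorem isSubrep_kerFamily {φ : ∀ i, M.V i →ₗ[k] N.V i} (hφ : defect M N φ = 0) :
    M.IsSubrep (kerFamily φ) := by
  intro e v hv
  change φ (s e) v = 0 at hv
  change φ (t e) (M.f e v) = 0
  rw [defect_eq_zero_iff.1 hφ, hv, map_zero]

theorem isSubrep_rangeFamily {φ : ∀ i, M.V i →ₗ[k] N.V i} (hφ : defect M N φ = 0) :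
    N.IsSubrep (rangeFamily φ) := by
  rintro e _ ⟨v, rfl⟩
  exact ⟨M.f e v, defect_eq_zero_iff.1 hφ e v⟩

theorem kerFamily_eq_top_iff {φ : ∀ i, M.V i →ₗ[k] N.V i} : kerFamily φ = ⊤ ↔ φ = 0 := by
  simp only [funext_iff, kerFamily, Pi.top_apply, LinearMap.ker_eq_top, Pi.zero_apply]

theorem rangeFamily_eq_bot_iff {φ : ∀ i, M.V i →ₗ[k] N.V i} : rangeFamily φ = ⊥ ↔ φ = 0 := by
  simp only [funext_iff, rangeFamily, Pi.bot_apply, LinearMap.range_eq_bot, Pi.zero_apply]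

theorem Indecomposable.eq_bot_or_eq_bot (hM : M.Indecomposable) {U W : ∀ i, Submodule k (M.V i)}
    (hU : M.IsSubrep U) (hW : M.IsSubrep W) (hUW : IsCompl U W) : U = ⊥ ∨ W = ⊥ := by
  by_contra! hne
  refine hM.2 (M.subrep U hU) (M.subrep W hW) ((not_isTrivial_subrep_iff hU).2 hne.1)
    ((not_isTrivial_subrep_iff hW).2 hne.2) (Iso.symm ?_)
  refine ⟨fun i => Submodule.prodEquivOfIsCompl (U i) (W i) (Pi.isCompl_iff.1 hUW i),
    fun e v => ?_⟩
  exact (map_add (M.f e) _ _).symm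

theorem isTrivial_of_injective {φ : ∀ i, M.V i →ₗ[k] N.V i} (hφ : ∀ i, Function.Injective (φ i))
    (h : rangeFamily φ = ⊥) : M.IsTrivial := by
  intro i
  refine ⟨fun v w => hφ i ?_⟩
  rw [rangeFamily_eq_bot_iff.1 h, Pi.zero_apply, LinearMap.zero_apply, LinearMap.zero_apply]

theorem indecomposable_subrep {A : ∀ i, Submodule k (M.V i)} (hA : M.IsSubrep A) (hne : A ≠ ⊥)
    (h : ∀ U W, M.IsSubrep U → M.IsSubrep W → Disjoint U W → U ⊔ W = A → U = ⊥ ∨ W = ⊥) :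
    (M.subrep A hA).Indecomposable := by
  refine ⟨(not_isTrivial_subrep_iff hA).2 hne, fun P Q hP hQ hPQ => ?_⟩
  obtain ⟨φ, hφ⟩ := hPQ.symm
  let ι (i) : P.V i × Q.V i →ₗ[k] M.V i := (A i).subtype ∘ₗ (φ i).toLinearMap
  have hι (i) : Function.Injective (ι i) := Subtype.val_injective.comp (φ i).injective
  have hιf (e) (v : P.V (s e) × Q.V (s e)) :
      ι (t e) (P.f e v.1, Q.f e v.2) = M.f e (ι (s e) v) := congrArg Subtype.val (hφ e v)
  have hrange (i) : LinearMap.range (ι i) = A i :=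
    (LinearMap.range_comp_of_range_eq_top _ (φ i).range).trans (A i).range_subtype
  let α (i) : P.V i →ₗ[k] M.V i := ι i ∘ₗ LinearMap.inl k (P.V i) (Q.V i)
  let β (i) : Q.V i →ₗ[k] M.V i := ι i ∘ₗ LinearMap.inr k (P.V i) (Q.V i)
  have hα : defect P M α = 0 := defect_eq_zero_iff.2 fun e v => by
    simpa [α] using hιf e (v, 0)
  have hβ : defect Q M β = 0 := defect_eq_zero_iff.2 fun e v => by
    simpa [β] using hιf e (0, v)
  have hdisj : Disjoint (rangeFamily α) (rangeFamily β) := Pi.disjoint_iff.2 fun i => by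
    simpa only [α, β, rangeFamily, LinearMap.range_comp] using
      (Submodule.disjoint_map (hι i)) LinearMap.isCompl_range_inl_inr.disjoint
  have hsup : rangeFamily α ⊔ rangeFamily β = A := funext fun i => by
    simp only [α, β, Pi.sup_apply, rangeFamily, LinearMap.range_comp, ← Submodule.map_sup,
      LinearMap.sup_range_inl_inr, Submodule.map_top, hrange]
  rcases h _ _ (isSubrep_rangeFamily hα) (isSubrep_rangeFamily hβ) hdisj hsup with h0 | h0
  · exact hP (isTrivial_of_injective (fun i => (hι i).comp LinearMap.inl_injective) h0)
  · exact hQ (isTrivial_of_injective (fun i => (hι i).comp LinearMap.inr_injective) h0)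

theorem Indecomposable.isNilpotent_of_kerFamily_ne_bot [Finite I] (hM : M.Indecomposable)
    {φ : ∀ i, Module.End k (M.V i)} (hφ : φ ∈ M.endAlgebra) (hker : kerFamily φ ≠ ⊥) :
    IsNilpotent φ := by
  have hfitting : ∀ᶠ n in Filter.atTop, ∀ i, IsCompl (LinearMap.ker (φ i ^ n))
      (LinearMap.range (φ i ^ n)) :=
    Filter.eventually_all.2 fun i => (φ i).eventually_isCompl_ker_pow_range_pow
  obtain ⟨n, hn, hpos⟩ := (hfitting.and (Filter.eventually_ge_atTop 1)).exists
  have hpow : defect M M (φ ^ n) = 0 := defect_eq_zero_iff.2 (pow_mem hφ n)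
  rcases hM.eq_bot_or_eq_bot (isSubrep_kerFamily hpow) (isSubrep_rangeFamily hpow)
    (Pi.isCompl_iff.2 hn) with hbot | hbot
  · refine absurd (eq_bot_iff.2 fun i => ?_) hker
    rw [← hbot]
    intro v hv
    rw [kerFamily, LinearMap.mem_ker] at hv ⊢
    obtain ⟨m, rfl⟩ := Nat.exists_eq_add_of_le' hpos
    rw [Pi.pow_apply, pow_succ, Module.End.mul_apply, hv, map_zero]
  · exact ⟨n, rangeFamily_eq_bot_iff.1 hbot⟩

end QRep

/-! ### Indecomposable representations that are not bricks -/

namespace QRep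

variable {k : Type} [Field k] {I E : Type} {s t : E → I} {M : QRep k I E s t}
  {θ : ∀ i, Module.End k (M.V i)}

/-- A nonzero noninjective endomorphism whose kernel is maximal among those of the nonzero
endomorphisms. -/
structure IsMaximalKerEndo (M : QRep k I E s t) (θ : ∀ i, Module.End k (M.V i)) : Prop where
  mem : θ ∈ M.endAlgebra
  ne_zero : θ ≠ 0
  ker_ne_bot : kerFamily θ ≠ ⊥
  ker_eq : ∀ φ ∈ M.endAlgebra, φ ≠ 0 → kerFamily θ ≤ kerFamily φ → kerFamily φ = kerFamily θ

theorem exists_isMaximalKerEndo [Finite I] {φ : ∀ i, Module.End k (M.V i)} (hφ : φ ∈ M.endAlgebra)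
    (hne : φ ≠ 0) (hker : kerFamily φ ≠ ⊥) : ∃ θ, M.IsMaximalKerEndo θ := by
  obtain ⟨_, ⟨θ, ⟨hθ, hθ0, hθker⟩, rfl⟩, hmax⟩ := exists_maximal_of_wellFoundedGT
    (· ∈ kerFamily '' {ψ | ψ ∈ M.endAlgebra ∧ ψ ≠ 0 ∧ kerFamily ψ ≠ ⊥}) ⟨_, φ, ⟨hφ, hne, hker⟩, rfl⟩
  refine ⟨θ, hθ, hθ0, hθker, fun ψ hψ hψ0 hle => (hmax ⟨ψ, ⟨hψ, hψ0, ?_⟩, rfl⟩ hle).antisymm hle⟩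
  exact ne_bot_of_le_ne_bot hθker hle

theorem IsMaximalKerEndo.mul_self_eq_zero [Finite I] (hM : M.Indecomposable)
    (hθ : M.IsMaximalKerEndo θ) : θ * θ = 0 := by
  by_contra hne
  obtain ⟨n, hn⟩ := hM.isNilpotent_of_kerFamily_ne_bot hθ.mem hθ.ker_ne_bot
  have hker : kerFamily (θ * θ) = kerFamily θ :=
    hθ.ker_eq _ (mul_mem hθ.mem hθ.mem) hne fun i => LinearMap.ker_le_ker_comp _ _
  refine hθ.ne_zero (kerFamily_eq_top_iff.1 (funext fun i => ?_))
  have hconst := Module.End.ker_pow_constant (f := θ i) (k := 1)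
    (by rw [pow_one, pow_two]; exact (congrFun hker i).symm) n
  have hzero : θ i ^ n = 0 := congrFun hn i
  rw [pow_one, pow_add, hzero, mul_zero, LinearMap.ker_zero] at hconst
  exact hconst

theorem IsMaximalKerEndo.rangeFamily_le [Finite I] (hM : M.Indecomposable)
    (hθ : M.IsMaximalKerEndo θ) : rangeFamily θ ≤ kerFamily θ := by
  rintro i _ ⟨v, rfl⟩
  exact LinearMap.congr_fun (congrFun (hθ.mul_self_eq_zero hM) i) v

/-- A decomposition `ker θ = A ⊕ B` into subrepresentations such that the range of `θ` has a nonzero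
component in `A`. -/
structure IsKerSplitting (M : QRep k I E s t) (θ : ∀ i, Module.End k (M.V i))
    (A B : ∀ i, Submodule k (M.V i)) : Prop where
  isSubrep_left : M.IsSubrep A
  isSubrep_right : M.IsSubrep B
  disjoint : Disjoint A B
  sup_eq : A ⊔ B = kerFamily θ
  not_rangeFamily_le : ¬ rangeFamily θ ≤ B

variable {A B U W : ∀ i, Submodule k (M.V i)}

theorem exists_minimal_isKerSplitting [Finite I] (hθ : θ ∈ M.endAlgebra) (hne : θ ≠ 0) :
    ∃ A, Minimal (fun A => ∃ B, M.IsKerSplitting θ A B) A :=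
  exists_minimal_of_wellFoundedLT _ ⟨kerFamily θ, ⊥,
    { isSubrep_left := isSubrep_kerFamily (defect_eq_zero_iff.2 hθ)
      isSubrep_right := .bot
      disjoint := disjoint_bot_right
      sup_eq := sup_bot_eq _
      not_rangeFamily_le := fun h => hne (rangeFamily_eq_bot_iff.1 (le_bot_iff.1 h)) }⟩

theorem IsKerSplitting.refine (h : M.IsKerSplitting θ A B) (hU : M.IsSubrep U) (hW : M.IsSubrep W)
    (hdisj : Disjoint U W) (hsup : U ⊔ W = A) (hrange : ¬ rangeFamily θ ≤ W ⊔ B) :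
    M.IsKerSplitting θ U (W ⊔ B) where
  isSubrep_left := hU
  isSubrep_right := hW.sup h.isSubrep_right
  disjoint := hdisj.disjoint_sup_right_of_disjoint_sup_left (hsup ▸ h.disjoint)
  sup_eq := by rw [← sup_assoc, hsup, h.sup_eq]
  not_rangeFamily_le := hrange

theorem indecomposable_subrep_of_minimal_isKerSplitting
    (hA : Minimal (fun A => ∃ B, M.IsKerSplitting θ A B) A) (hB : M.IsKerSplitting θ A B)
    (hrange : rangeFamily θ ≤ kerFamily θ) : (M.subrep A hB.isSubrep_left).Indecomposable := by
  have key : ∀ {U W}, M.IsSubrep U → M.IsSubrep W → Disjoint U W → U ⊔ W = A →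
      ¬ rangeFamily θ ≤ W ⊔ B → W = ⊥ := fun {U W} hU hW hdisj hsup hnot => by
    have hAU : A ≤ U := hA.2 ⟨_, hB.refine hU hW hdisj hsup hnot⟩ (hsup ▸ le_sup_left)
    exact le_bot_iff.1 (hdisj ((hsup ▸ le_sup_right : W ≤ A).trans hAU) le_rfl)
  refine indecomposable_subrep _ (fun h0 => hB.not_rangeFamily_le ?_) fun U W hU hW hdisj hsup => ?_
  · rwa [← hB.sup_eq, h0, bot_sup_eq] at hrange
  by_cases hWB : rangeFamily θ ≤ W ⊔ B
  · refine .inl (key hW hU hdisj.symm (sup_comm W U ▸ hsup) fun hUB => hB.not_rangeFamily_le ?_)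
    have hinf : (B ⊔ W) ⊓ (B ⊔ U) = B := by
      have hW : Disjoint W (U ⊔ B) := hdisj.symm.disjoint_sup_right_of_disjoint_sup_left
        (by rw [sup_comm, hsup]; exact hB.disjoint)
      rw [sup_inf_assoc_of_le W le_sup_left, sup_comm B U, hW.eq_bot, sup_bot_eq]
    rw [← hinf, sup_comm B, sup_comm B]
    exact le_inf hWB hUB
  · exact .inr (key hU hW hdisj hsup hWB)

theorem exists_hom_retraction {hA : M.IsSubrep A} (hsurj : Function.Surjective
      (defect (M.subrep A hA) (M.subrep A hA))) {β ρ : ∀ i, M.V i →ₗ[k] A i}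
    (hβ : defect M (M.subrep A hA) β = 0) (hAβ : ∀ i, A i ≤ LinearMap.ker (β i))
    (hρ : ∀ i (a : A i), ρ i a = a)
    (hker : ∀ e, LinearMap.ker (β (s e)) ≤ LinearMap.ker (defect M (M.subrep A hA) ρ e)) :
    ∃ r : ∀ i, M.V i →ₗ[k] A i, defect M (M.subrep A hA) r = 0 ∧ ∀ i (a : A i), r i a = a := by
  choose γ hγ using fun e => exists_comp_eq_of_ker_le_ker (hker e)
  obtain ⟨ψ, hψ⟩ := hsurj γ
  refine ⟨fun i => ρ i - ψ i ∘ₗ β i, defect_eq_zero_iff.2 fun e v => ?_, fun i a => ?_⟩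
  · have hργ := LinearMap.congr_fun (hγ e) v
    rw [← hψ, LinearMap.comp_apply, defect_apply, defect_apply, ← defect_eq_zero_iff.1 hβ] at hργ
    simp only [LinearMap.sub_apply, LinearMap.comp_apply, map_sub]
    rw [sub_eq_sub_iff_sub_eq_sub, ← hργ]
  · have ha : β i a = 0 := hAβ i a.2
    rw [LinearMap.sub_apply, LinearMap.comp_apply, ha, map_zero, sub_zero, hρ]

theorem Indecomposable.eq_bot_or_eq_top_of_retraction (hM : M.Indecomposable) (hA : M.IsSubrep A)
    {r : ∀ i, M.V i →ₗ[k] A i} (hr : defect M (M.subrep A hA) r = 0)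
    (hrA : ∀ i (a : A i), r i a = a) : A = ⊥ ∨ A = ⊤ := by
  have hcompl : IsCompl A (kerFamily (N := M.subrep A hA) r) :=
    Pi.isCompl_iff.2 fun i => LinearMap.isCompl_of_proj (hrA i)
  refine (hM.eq_bot_or_eq_bot hA (isSubrep_kerFamily hr) hcompl).imp_right fun h => ?_
  rw [← hcompl.sup_eq_top, h, sup_bot_eq]

theorem IsKerSplitting.defect_retraction_eq_zero (h : M.IsKerSplitting θ A B)
    {ρ : ∀ i, M.V i →ₗ[k] A i} (hρA : ∀ i (a : A i), ρ i a = a)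
    (hρB : ∀ i, B i ≤ LinearMap.ker (ρ i)) (e : E) :
    LinearMap.ker (θ (s e)) ≤ LinearMap.ker (defect M (M.subrep A h.isSubrep_left) ρ e) := by
  intro v hv
  obtain ⟨a, ha, b, hb, rfl⟩ := Submodule.mem_sup.1 ((congrFun h.sup_eq (s e)).ge hv)
  have hb0 : ρ (s e) b = 0 := hρB _ hb
  have hfb0 : ρ (t e) (M.f e b) = 0 := hρB _ (h.isSubrep_right e b hb)
  rw [LinearMap.mem_ker, defect_apply, map_add, map_add, map_add, hb0, hfb0, hρA _ ⟨a, ha⟩,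
    hρA _ ⟨M.f e a, h.isSubrep_left e a ha⟩, add_zero, add_zero]
  exact sub_self _

theorem IsKerSplitting.retraction_comp_ne_zero (h : M.IsKerSplitting θ A B)
    (hrange : rangeFamily θ ≤ kerFamily θ) {ρ : ∀ i, M.V i →ₗ[k] A i}
    (hρA : ∀ i (a : A i), ρ i a = a) (hρB : ∀ i, B i ≤ LinearMap.ker (ρ i)) :
    (fun i => (A i).subtype ∘ₗ ρ i ∘ₗ θ i) ≠ 0 := by
  refine fun hzero => h.not_rangeFamily_le ?_
  intro i v hv
  obtain ⟨a, ha, b, hb, rfl⟩ := Submodule.mem_sup.1 ((congrFun h.sup_eq i).ge (hrange i hv))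
  obtain ⟨w, hw⟩ := hv
  have hb0 : ρ i b = 0 := hρB _ hb
  have ha0 : ((ρ i (θ i w) : A i) : M.V i) = 0 := LinearMap.congr_fun (congrFun hzero i) w
  rw [hw, map_add, hρA i ⟨a, ha⟩, hb0, add_zero] at ha0
  obtain rfl : a = 0 := ha0
  exact add_mem (zero_mem _) hb

theorem IsKerSplitting.not_surjective_defect [Finite I] (hM : M.Indecomposable)
    (hθ : M.IsMaximalKerEndo θ) (h : M.IsKerSplitting θ A B) (hne : A ≠ ⊥) :
    ¬ Function.Surjective (defect (M.subrep A h.isSubrep_left) (M.subrep A h.isSubrep_left)) := by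
  intro hsurj
  choose ρ hρA hρB using fun i => exists_retraction_of_disjoint (Pi.disjoint_iff.1 h.disjoint i)
  have hrange := hθ.rangeFamily_le hM
  have hρker := h.defect_retraction_eq_zero hρA hρB
  let β (i) : M.V i →ₗ[k] A i := ρ i ∘ₗ θ i
  have hβ : defect M (M.subrep A h.isSubrep_left) β = 0 := defect_eq_zero_iff.2 fun e v => by
    have hθv := hρker e (hrange (s e) ⟨v, rfl⟩)
    rw [LinearMap.mem_ker, defect_apply, sub_eq_zero] at hθv
    rw [LinearMap.comp_apply, hθ.mem e v, hθv, LinearMap.comp_apply]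
  have hβker : ∀ i, LinearMap.ker (β i) = LinearMap.ker (θ i) := fun i => by
    have heq := hθ.ker_eq (fun i => (A i).subtype ∘ₗ β i)
      (fun e v => congrArg Subtype.val (defect_eq_zero_iff.1 hβ e v))
      (h.retraction_comp_ne_zero hrange hρA hρB)
      fun i => (LinearMap.ker_le_ker_comp (θ i) (ρ i)).trans (LinearMap.ker_le_ker_comp _ _)
    rw [← LinearMap.ker_comp_of_ker_eq_bot (β i) (A i).ker_subtype]
    exact congrFun heq i
  have hAker : A ≤ kerFamily θ := h.sup_eq ▸ le_sup_left
  obtain ⟨r, hr, hrA⟩ := exists_hom_retraction hsurj hβ (fun i => (hβker i).symm ▸ hAker i) hρA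
    fun e => (hβker (s e)).symm ▸ hρker e
  obtain hbot | htop := hM.eq_bot_or_eq_top_of_retraction h.isSubrep_left hr hrA
  · exact hne hbot
  · exact hθ.ne_zero (kerFamily_eq_top_iff.1 (top_le_iff.1 (htop ▸ hAker)))

/-- **Ringel's lemma**. -/
theorem Indecomposable.exists_subrep_not_surjective_defect [Finite I] (hM : M.Indecomposable)
    {φ : ∀ i, Module.End k (M.V i)} (hφ : φ ∈ M.endAlgebra) (hne : φ ≠ 0)
    (hker : kerFamily φ ≠ ⊥) :
    ∃ (A : ∀ i, Submodule k (M.V i)) (hA : M.IsSubrep A), A < ⊤ ∧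
      (M.subrep A hA).Indecomposable ∧
      ¬ Function.Surjective (defect (M.subrep A hA) (M.subrep A hA)) := by
  obtain ⟨θ, hθ⟩ := exists_isMaximalKerEndo hφ hne hker
  obtain ⟨A, hA⟩ := exists_minimal_isKerSplitting hθ.mem hθ.ne_zero
  obtain ⟨B, hAB⟩ := hA.1
  have hind := indecomposable_subrep_of_minimal_isKerSplitting hA hAB (hθ.rangeFamily_le hM)
  refine ⟨A, hAB.isSubrep_left, ?_, hind,
    hAB.not_surjective_defect hM hθ ((not_isTrivial_subrep_iff _).1 hind.1)⟩
  refine lt_top_iff_ne_top.2 fun htop => hθ.ne_zero (kerFamily_eq_top_iff.1 ?_)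
  rw [← hAB.sup_eq, htop, top_sup_eq]

end QRep

/-! ### Positive Tits form: indecomposables are rigid -/

/-- The Tits form of the quiver `(I, E, s, t)`. -/
def titsForm {I E : Type} [Fintype I] [Fintype E] (s t : E → I) (d : I → ℕ) : ℤ :=
  ∑ i, (d i : ℤ) ^ 2 - ∑ e, (d (s e) : ℤ) * d (t e)

theorem titsForm_smul {I E : Type} [Fintype I] [Fintype E] (s t : E → I) (r : ℕ) (d : I → ℕ) :
    titsForm s t (r • d) = r ^ 2 * titsForm s t d := by
  simp only [titsForm, Pi.smul_apply, smul_eq_mul, Nat.cast_mul, mul_sub, Finset.mul_sum]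
  congr 1 <;> exact Finset.sum_congr rfl fun _ _ => by ring

theorem finrank_dvd_finrank_of_isDomain (k D V : Type*) [Field k] [Ring D] [IsDomain D]
    [Algebra k D] [FiniteDimensional k D] [AddCommGroup V] [Module k V] [Module D V]
    [IsScalarTower k D V] : Module.finrank k D ∣ Module.finrank k V := by
  let _ : DivisionRing D := divisionRingOfFiniteDimensional k D
  exact Dvd.intro _ (Module.finrank_mul_finrank k D V)

namespace QRep

variable {k : Type} [Field k] {I E : Type} {s t : E → I} {M : QRep k I E s t}

theorem dimVec_ne_zero (h : ¬ M.IsTrivial) : M.dimVec ≠ 0 :=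
  fun h0 => h fun i => Module.finrank_zero_iff.1 (congrFun h0 i)

theorem sum_dimVec_subrep_lt [Fintype I] {A : ∀ i, Submodule k (M.V i)} (hA : M.IsSubrep A)
    (hlt : A < ⊤) : ∑ i, (M.subrep A hA).dimVec i < ∑ i, M.dimVec i := by
  obtain ⟨i, hi⟩ := Function.ne_iff.1 hlt.ne
  exact Finset.sum_lt_sum (fun j _ => Submodule.finrank_le (A j))
    ⟨i, Finset.mem_univ i, Submodule.finrank_lt hi⟩

theorem toSubmodule_endAlgebra (M : QRep k I E s t) :
    Subalgebra.toSubmodule M.endAlgebra = LinearMap.ker (defect M M) :=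
  Submodule.ext fun _ => defect_eq_zero_iff.symm

theorem titsForm_dimVec_add_finrank_coker [Fintype I] [Fintype E] (M : QRep k I E s t) :
    titsForm s t M.dimVec +
      Module.finrank k ((∀ e, M.V (s e) →ₗ[k] M.V (t e)) ⧸ LinearMap.range (defect M M)) =
      Module.finrank k M.endAlgebra := by
  have hdom : Module.finrank k (∀ i, M.V i →ₗ[k] M.V i) = ∑ i, M.dimVec i ^ 2 := by
    simp only [Module.finrank_pi_fintype, Module.finrank_linearMap, dimVec, sq]
  have hcod : Module.finrank k (∀ e, M.V (s e) →ₗ[k] M.V (t e)) =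
      ∑ e, M.dimVec (s e) * M.dimVec (t e) := by
    simp only [Module.finrank_pi_fintype, Module.finrank_linearMap, dimVec]
  have hrank := LinearMap.finrank_range_add_finrank_ker (defect M M)
  have hquot := Submodule.finrank_quotient_add_finrank (LinearMap.range (defect M M))
  have hend : Module.finrank k M.endAlgebra = Module.finrank k (LinearMap.ker (defect M M)) := by
    rw [← toSubmodule_endAlgebra, Subalgebra.finrank_toSubmodule]
  have htits : titsForm s t M.dimVec =
      (∑ i, M.dimVec i ^ 2 : ℕ) - (∑ e, M.dimVec (s e) * M.dimVec (t e) : ℕ) := by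
    simp only [titsForm, Nat.cast_sum, Nat.cast_pow, Nat.cast_mul]
  omega

theorem isDomain_endAlgebra (hM : ¬ M.IsTrivial)
    (hinj : ∀ φ ∈ M.endAlgebra, φ ≠ 0 → kerFamily φ = ⊥) : IsDomain M.endAlgebra := by
  have : NoZeroDivisors M.endAlgebra := ⟨fun {φ ψ} h => by
    refine or_iff_not_imp_left.2 fun hφ => Subtype.ext (funext fun i => LinearMap.ext fun v => ?_)
    have hker := congrFun (hinj φ φ.2 fun h0 => hφ (Subtype.ext h0)) i
    have hφψ : φ.1 i (ψ.1 i v) = 0 := LinearMap.congr_fun (congrFun (congrArg Subtype.val h) i) v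
    exact (Submodule.mem_bot k).1 (hker.le hφψ)⟩
  have : Nontrivial M.endAlgebra := ⟨1, 0, fun h => hM fun i => ⟨fun v w => ?_⟩⟩
  · exact NoZeroDivisors.to_isDomain _
  · have hzero (u : M.V i) : u = 0 := LinearMap.congr_fun (congrFun (congrArg Subtype.val h) i) u
    rw [hzero v, hzero w]

theorem finrank_endAlgebra_dvd_dimVec [Finite I] [IsDomain M.endAlgebra] (i : I) :
    Module.finrank k M.endAlgebra ∣ M.dimVec i := by
  let _ : Module M.endAlgebra (M.V i) :=
    Module.compHom (M.V i) ((Pi.evalRingHom _ i).comp M.endAlgebra.val.toRingHom)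
  have : IsScalarTower k M.endAlgebra (M.V i) := ⟨fun a φ v => rfl⟩
  exact finrank_dvd_finrank_of_isDomain k M.endAlgebra (M.V i)

/-- `Ext¹(M, M) = 0`. -/
def IsRigid (M : QRep k I E s t) : Prop := Function.Surjective (defect M M)

variable [Fintype I] [Fintype E]

/-- The dimension `r` of the division algebra `End(M)` divides the dimension vector, so that
`r² ≤ q(dim M) ≤ r` for the Tits form `q`. -/
theorem isRigid_and_titsForm_eq_one_of_kerFamily_eq_bot
    (hq : ∀ d : I → ℕ, d ≠ 0 → 0 < titsForm s t d)
    (hM : ¬ M.IsTrivial) (hinj : ∀ φ ∈ M.endAlgebra, φ ≠ 0 → kerFamily φ = ⊥) :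
    M.IsRigid ∧ titsForm s t M.dimVec = 1 := by
  have := isDomain_endAlgebra hM hinj
  choose d hd using finrank_endAlgebra_dvd_dimVec (M := M)
  have heuler := titsForm_dimVec_add_finrank_coker M
  have hdim : M.dimVec = Module.finrank k M.endAlgebra • d := funext hd
  have hdpos := hq d fun h0 => dimVec_ne_zero hM (by rw [hdim, h0, smul_zero])
  have hqM : titsForm s t M.dimVec = Module.finrank k M.endAlgebra ^ 2 * titsForm s t d := by
    conv_lhs => rw [hdim, titsForm_smul]
  have hrpos : 0 < Module.finrank k M.endAlgebra := Module.finrank_pos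
  have hr : Module.finrank k M.endAlgebra = 1 := by nlinarith
  have hqpos := hq _ (dimVec_ne_zero hM)
  rw [hr] at heuler
  refine ⟨LinearMap.range_eq_top.1 (Submodule.Quotient.subsingleton_iff.1 ?_), by omega⟩
  exact Module.finrank_zero_iff (R := k).1 (by omega)

theorem Indecomposable.isRigid_and_titsForm_eq_one (hq : ∀ d : I → ℕ, d ≠ 0 → 0 < titsForm s t d)
    (hM : M.Indecomposable) : M.IsRigid ∧ titsForm s t M.dimVec = 1 := by
  induction hn : ∑ i, M.dimVec i using Nat.strong_induction_on generalizing M with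
  | _ n ih =>
  refine isRigid_and_titsForm_eq_one_of_kerFamily_eq_bot hq hM.1 fun φ hφ hne =>
    by_contra fun hker => ?_
  obtain ⟨A, hA, hlt, hind, hext⟩ := hM.exists_subrep_not_surjective_defect hφ hne hker
  exact hext (ih _ (hn ▸ sum_dimVec_subrep_lt hA hlt) hind rfl).1

end QRep

/-! ### Rigid representations are determined by their dimension vectors -/

section PolynomialCurve

open Polynomial

variable {k V W : Type*} [Field k] [AddCommGroup V] [Module k V] [AddCommGroup W] [Module k W]

/-- A curve `γ : k → V` with polynomial coordinates. -/
def IsPolynomialCurve (γ : k → V) : Prop :=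
  ∀ f : Module.Dual k V, ∃ p : k[X], ∀ l, p.eval l = f (γ l)

namespace IsPolynomialCurve

theorem map {γ : k → V} (hγ : IsPolynomialCurve γ) (T : V →ₗ[k] W) :
    IsPolynomialCurve fun l => T (γ l) :=
  fun f => hγ (f ∘ₗ T)

theorem sub {γ δ : k → V} (hγ : IsPolynomialCurve γ) (hδ : IsPolynomialCurve δ) :
    IsPolynomialCurve fun l => γ l - δ l := fun f => by
  obtain ⟨p, hp⟩ := hγ f
  obtain ⟨q, hq⟩ := hδ f
  exact ⟨p - q, fun l => by rw [eval_sub, hp, hq, map_sub]⟩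

theorem eval_smul {γ : k → V} (hγ : IsPolynomialCurve γ) (q : k[X]) :
    IsPolynomialCurve fun l => q.eval l • γ l := fun f => by
  obtain ⟨p, hp⟩ := hγ f
  exact ⟨q * p, fun l => by rw [eval_mul, hp, map_smul, smul_eq_mul]⟩

theorem const (v : V) : IsPolynomialCurve fun _ : k => v :=
  fun f => ⟨C (f v), fun _ => eval_C⟩

theorem matrix_map_eval {n : Type*} [Finite n] (P : Matrix n n k[X]) :
    IsPolynomialCurve fun l => P.map (eval l) := fun f => by
  classical
  cases nonempty_fintype n
  refine ⟨∑ i, ∑ j, P i j * C (f (Matrix.single i j 1)), fun l => ?_⟩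
  beta_reduce
  rw [Matrix.matrix_eq_sum_single (P.map (eval l))]
  simp only [eval_finsetSum, eval_mul, eval_C, map_sum, Matrix.map_apply]
  refine Finset.sum_congr rfl fun i _ => Finset.sum_congr rfl fun j _ => ?_
  rw [← smul_eq_mul, ← map_smul, Matrix.smul_single, smul_eq_mul, mul_one]

theorem exists_eval_eq_det [FiniteDimensional k V] {γ : k → Module.End k V}
    (hγ : IsPolynomialCurve γ) : ∃ p : k[X], ∀ l, p.eval l = LinearMap.det (γ l) := by
  let b := Module.finBasis k V
  choose P hP using fun i j => hγ
    (Matrix.entryLinearMap k k i j ∘ₗ (LinearMap.toMatrix b b).toLinearMap)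
  refine ⟨(Matrix.of P).det, fun l => ?_⟩
  rw [← LinearMap.det_toMatrix b, ← coe_evalRingHom, RingHom.map_det]
  exact congrArg Matrix.det (Matrix.ext fun i j => hP i j l)

end IsPolynomialCurve

/-- For a section `σ` of `T` the curve `det (1 + l T'σ) v - l σ (adj (1 + l T'σ)) (T' v)` does the
job. -/
theorem exists_isPolynomialCurve_mem_ker [FiniteDimensional k W] {T : V →ₗ[k] W}
    (hT : Function.Surjective T) (T' : V →ₗ[k] W) {v : V} (hv : T v = 0) :
    ∃ γ : k → V, IsPolynomialCurve γ ∧ γ 0 = v ∧ ∀ l : k, (T + l • T') (γ l) = 0 := by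
  obtain ⟨σ, hσ⟩ := T.exists_rightInverse_of_surjective (LinearMap.range_eq_top.2 hT)
  let b := Module.finBasis k W
  let Z := LinearMap.toMatrix b b (T' ∘ₗ σ)
  let P : Matrix _ _ k[X] := 1 + (X : k[X]) • Z.map C
  have hP (l : k) : (evalRingHom l).mapMatrix P = 1 + l • Z := by
    ext i j
    simpa [P, Matrix.one_apply, apply_ite (eval l)] using mul_comm (Z i j) l
  have hdet (l : k) : P.det.eval l = (1 + l • Z).det := by
    rw [← hP, ← RingHom.map_det, coe_evalRingHom]
  have hadj (l : k) : P.adjugate.map (eval l) = (1 + l • Z).adjugate := by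
    rw [← hP, ← RingHom.map_adjugate]; rfl
  have hcomp (l : k) (w : W) : (T + l • T') (σ w) = Matrix.toLin b b (1 + l • Z) w := by
    have hTσ : T (σ w) = w := LinearMap.congr_fun hσ w
    simp only [LinearMap.add_apply, LinearMap.smul_apply, hTσ, Z, map_add, map_smul,
      Matrix.toLin_one, Matrix.toLin_toMatrix, LinearMap.id_apply, LinearMap.comp_apply]
  let δ : Matrix _ _ k →ₗ[k] V := σ ∘ₗ LinearMap.applyₗ (T' v) ∘ₗ (Matrix.toLin b b).toLinearMap
  refine ⟨fun l => P.det.eval l • v - (X : k[X]).eval l • δ (P.adjugate.map (eval l)),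
    ((IsPolynomialCurve.const v).eval_smul _).sub
      (((IsPolynomialCurve.matrix_map_eval _).map δ).eval_smul X), ?_, fun l => ?_⟩
  · simp [hdet]
  · have hδ : (T + l • T') (δ (1 + l • Z).adjugate) = (1 + l • Z).det • T' v := by
      change (T + l • T') (σ (Matrix.toLin b b (1 + l • Z).adjugate (T' v))) = _
      rw [hcomp, ← LinearMap.comp_apply, ← Matrix.toLin_mul, Matrix.mul_adjugate, map_smul,
        Matrix.toLin_one, LinearMap.smul_apply, LinearMap.id_apply]
    beta_reduce
    rw [hdet, hadj, eval_X, map_sub, map_smul, map_smul, hδ, LinearMap.add_apply, hv, zero_add,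
      LinearMap.smul_apply, smul_comm, sub_self]

end PolynomialCurve

namespace QRep

open Polynomial

variable {k : Type} [Field k] {I E : Type} {s t : E → I} {M N : QRep k I E s t}

/-- The representation on the spaces of `M` whose structure maps interpolate, with parameter `l`,
between those of `M` and `h`. -/
abbrev lineMap (M : QRep k I E s t) (h : ∀ e, M.V (s e) →ₗ[k] M.V (t e)) (l : k) :
    QRep k I E s t where
  V := M.V
  f e := (1 - l) • M.f e + l • h e

theorem lineMap_eq_lineMap_one_sub (M : QRep k I E s t) (h : ∀ e, M.V (s e) →ₗ[k] M.V (t e))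
    (l : k) : M.lineMap h l = lineMap { V := M.V, f := h } M.f (1 - l) := by
  simp only [lineMap, sub_sub_cancel, add_comm]

theorem IsRigid.exists_eval_ne_zero_iso_lineMap [Finite I] [Finite E] (hM : M.IsRigid)
    (h : ∀ e, M.V (s e) →ₗ[k] M.V (t e)) :
    ∃ p : k[X], p ≠ 0 ∧ ∀ l, p.eval l ≠ 0 → M.Iso (M.lineMap h l) := by
  have := Fintype.ofFinite I
  let N : QRep k I E s t := { V := M.V, f := h }
  obtain ⟨γ, hγ, hγ0, hγker⟩ := exists_isPolynomialCurve_mem_ker hM (defect M N - defect M M)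
    (v := fun _ => LinearMap.id) (defect_eq_zero_iff.2 fun _ _ => rfl)
  choose p hp using fun i => (hγ.map (LinearMap.proj i)).exists_eval_eq_det
  refine ⟨∏ i, p i, fun h0 => ?_, fun l hl => ?_⟩
  · have heval : (∏ i, p i).eval 0 = 1 := by
      rw [eval_prod]
      refine Finset.prod_eq_one fun i _ => ?_
      rw [hp, hγ0, LinearMap.proj_apply, LinearMap.det_id]
    rw [h0, eval_zero] at heval
    exact zero_ne_one heval
  · rw [eval_prod, Finset.prod_ne_zero_iff] at hl
    refine ⟨fun i => LinearMap.equivOfDetNeZero (γ l i) (hp i l ▸ hl i (Finset.mem_univ i)),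
      fun e v => ?_⟩
    have hev := LinearMap.congr_fun (congrFun (hγker l) e) v
    change defect M M (γ l) e v + l • (defect M N (γ l) e v - defect M M (γ l) e v) = 0 at hev
    change γ l (t e) (M.f e v) = (1 - l) • M.f e (γ l (s e) v) + l • h e (γ l (s e) v)
    rw [defect_apply, defect_apply] at hev
    rw [← sub_eq_zero, ← hev]
    module

theorem iso_of_isRigid_of_V_eq [Infinite k] [Finite I] [Finite E] (hM : M.IsRigid)
    {h : ∀ e, M.V (s e) →ₗ[k] M.V (t e)} (hN : IsRigid { V := M.V, f := h }) :
    M.Iso { V := M.V, f := h } := by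
  obtain ⟨p, hp, hpM⟩ := hM.exists_eval_ne_zero_iso_lineMap h
  obtain ⟨q, hq, hqN⟩ := hN.exists_eval_ne_zero_iso_lineMap M.f
  have hfinite : {l | p.eval l = 0 ∨ q.eval (1 - l) = 0}.Finite := by
    refine (finite_setOfPred_isRoot hp).union ?_
    exact (finite_setOfPred_isRoot hq).preimage sub_right_injective.injOn
  obtain ⟨l, hl⟩ := hfinite.exists_notMem
  rw [Set.mem_ofPred_eq, not_or] at hl
  refine (hpM l hl.1).trans (Iso.symm ?_)
  rw [lineMap_eq_lineMap_one_sub]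
  exact hqN (1 - l) hl.2

variable [Infinite k] [Fintype I] [Fintype E]

theorem iso_of_dimVec_eq (hq : ∀ d : I → ℕ, d ≠ 0 → 0 < titsForm s t d)
    (hM : M.Indecomposable) (hN : N.Indecomposable) (h : M.dimVec = N.dimVec) : M.Iso N := by
  let u (i) : M.V i ≃ₗ[k] N.V i := LinearEquiv.ofFinrankEq _ _ (congrFun h i)
  let N' : QRep k I E s t :=
    { V := M.V, f := fun e => (u (t e)).symm.toLinearMap ∘ₗ N.f e ∘ₗ (u (s e)).toLinearMap }
  have hiso : N'.Iso N := ⟨u, fun e v => (u (t e)).apply_symm_apply _⟩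
  exact (iso_of_isRigid_of_V_eq (hM.isRigid_and_titsForm_eq_one hq).1
    ((hN.of_iso hiso.symm).isRigid_and_titsForm_eq_one hq).1).trans hiso

theorem finiteRepType_of_titsForm_pos (hq : ∀ d : I → ℕ, d ≠ 0 → 0 < titsForm s t d)
    (hfin : {d : I → ℕ | titsForm s t d = 1}.Finite) : FiniteRepType k I E s t := by
  let D := dimVec '' {M : QRep k I E s t | M.Indecomposable}
  have : Finite D := hfin.subset <| by
    rintro _ ⟨M, hM, rfl⟩
    exact (hM.isRigid_and_titsForm_eq_one hq).2
  obtain ⟨n, ⟨ε⟩⟩ := Finite.exists_equiv_fin D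
  choose F hF hFdim using fun d : D => d.2
  refine ⟨n, F ∘ ε.symm, fun M hM => ⟨ε ⟨M.dimVec, M, hM, rfl⟩, ?_⟩⟩
  exact iso_of_dimVec_eq hq hM (hF _) (by rw [Function.comp_apply, hFdim, Equiv.symm_apply_apply])

end QRep

/-! ### Finite type forces the Tits form to be positive -/

section AlgebraicDependence

open MvPolynomial

variable {k σ τ : Type*} [Field k]

theorem trdeg_localizationAway_mvPolynomial {δ : MvPolynomial σ k} (hδ : δ ≠ 0) :
    Algebra.trdeg k (Localization.Away δ) = Cardinal.lift (Cardinal.mk σ) := by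
  have hpowers : Submonoid.powers δ ≤ nonZeroDivisors (MvPolynomial σ k) :=
    powers_le_nonZeroDivisors_of_noZeroDivisors hδ
  have : IsDomain (Localization.Away δ) := IsLocalization.isDomain_of_le_nonZeroDivisors _ hpowers
  have : FaithfulSMul (MvPolynomial σ k) (Localization.Away δ) :=
    (faithfulSMul_iff_algebraMap_injective _ _).2 (IsLocalization.injective _ hpowers)
  have : Algebra.IsAlgebraic (MvPolynomial σ k) (Localization.Away δ) :=
    IsLocalization.isAlgebraic _ (Submonoid.powers δ)
  rw [← trdeg_add_eq k (MvPolynomial σ k), trdeg_eq_zero (R := MvPolynomial σ k), add_zero,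
    trdeg_of_isDomain]

theorem exists_aeval_eq_zero_of_trdeg_lt [Fintype τ] {L : Type*} [CommRing L] [Algebra k L]
    [Nontrivial L] (h : Algebra.trdeg k L < Fintype.card τ) (z : τ → L) :
    ∃ P : MvPolynomial τ k, P ≠ 0 ∧ aeval z P = 0 := by
  have hz : ¬ AlgebraicIndependent k z := fun hz =>
    h.not_ge (by simpa using hz.lift_cardinalMk_le_trdeg)
  rw [algebraicIndependent_iff] at hz
  push Not at hz
  obtain ⟨P, hP, hP0⟩ := hz
  exact ⟨P, hP0, hP⟩

theorem exists_eval_div_eq_zero_of_card_lt [Fintype σ] [Fintype τ]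
    (h : Fintype.card σ < Fintype.card τ) (a b : τ → MvPolynomial σ k) :
    ∃ P : MvPolynomial τ k, P ≠ 0 ∧ ∀ x : σ → k, (∀ j, eval x (b j) ≠ 0) →
      eval (fun j => eval x (a j) / eval x (b j)) P = 0 := by
  classical
  by_cases hb : ∏ j, b j = 0
  · obtain ⟨j, -, hj⟩ := Finset.prod_eq_zero_iff.1 hb
    exact ⟨1, one_ne_zero, fun x hx => absurd (by rw [hj, map_zero]) (hx j)⟩
  set δ := ∏ j, b j with hδ
  let L := Localization.Away δ
  have hunit : ∀ j, IsUnit (algebraMap (MvPolynomial σ k) L (b j)) := fun j =>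
    isUnit_of_dvd_unit (map_dvd _ (Finset.dvd_prod_of_mem b (Finset.mem_univ j)))
      (IsLocalization.Away.algebraMap_isUnit δ)
  choose u hu using fun j => (hunit j).exists_left_inv
  have : Nontrivial L := (IsLocalization.injective L
    (powers_le_nonZeroDivisors_of_noZeroDivisors hb)).nontrivial
  obtain ⟨P, hP0, hP⟩ := exists_aeval_eq_zero_of_trdeg_lt
    (by rw [trdeg_localizationAway_mvPolynomial hb]; simpa using h)
    (fun j => algebraMap (MvPolynomial σ k) L (a j) * u j)
  refine ⟨P, hP0, fun x hx => ?_⟩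
  have hpow : ∀ y : Submonoid.powers δ, IsUnit (aeval x (y : MvPolynomial σ k)) := by
    rintro ⟨_, n, rfl⟩
    rw [map_pow, aeval_eq_eval, hδ, map_prod]
    exact (Finset.prod_ne_zero_iff.2 fun j _ => hx j).isUnit.pow n
  let ev : L →ₐ[k] k := IsLocalization.liftAlgHom (M := Submonoid.powers δ) (f := aeval x) hpow
  have hev : ∀ p, ev (algebraMap _ L p) = eval x p := IsLocalization.lift_eq _
  have hquot : ∀ j, ev (algebraMap _ L (a j) * u j) = eval x (a j) / eval x (b j) := fun j => by
    have := congrArg ev (hu j)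
    rw [map_mul, hev, map_one] at this
    rw [map_mul, hev, div_eq_mul_inv, eq_inv_of_mul_eq_one_left this]
  have hPev := congrArg ev hP
  rw [map_zero, ← AlgHom.comp_apply, comp_aeval, aeval_eq_eval] at hPev
  simpa only [hquot] using hPev

end AlgebraicDependence

namespace QRep

variable {k : Type} [Field k] {I E : Type} {s t : E → I}

theorem Iso.dsum {M M' N N' : QRep k I E s t} (hM : M.Iso M') (hN : N.Iso N') :
    (M.dsum N).Iso (M'.dsum N') := by
  obtain ⟨φ, hφ⟩ := hM
  obtain ⟨ψ, hψ⟩ := hN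
  exact ⟨fun i => (φ i).prodCongr (ψ i), fun e v => Prod.ext (hφ e v.1) (hψ e v.2)⟩

theorem IsTrivial.iso_zero {M : QRep k I E s t} (hM : M.IsTrivial) :
    M.Iso (zero k I E s t) :=
  have : ∀ i, Subsingleton (M.V i) := hM
  ⟨fun _ => ⟨0, 0, fun _ => Subsingleton.elim _ _, fun _ => rfl⟩, fun _ _ => rfl⟩

theorem dimVec_dsum (M N : QRep k I E s t) : (M.dsum N).dimVec = M.dimVec + N.dimVec :=
  funext fun _ => Module.finrank_prod

theorem Iso.dimVec_eq {M N : QRep k I E s t} (h : M.Iso N) : M.dimVec = N.dimVec := by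
  obtain ⟨φ, -⟩ := h
  exact funext fun i => (φ i).finrank_eq

theorem sum_dimVec_pos [Fintype I] {M : QRep k I E s t} (hM : ¬ M.IsTrivial) :
    0 < ∑ i, M.dimVec i :=
  Finset.sum_pos' (fun _ _ => Nat.zero_le _) <| by
    obtain ⟨i, hi⟩ := Function.ne_iff.1 (dimVec_ne_zero hM)
    exact ⟨i, Finset.mem_univ i, Nat.pos_of_ne_zero hi⟩

theorem exists_finite_forall_sum_dimVec_le_iso [Fintype I] (h : FiniteRepType k I E s t) (N : ℕ) :
    ∃ S : Set (QRep k I E s t), S.Finite ∧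
      ∀ M : QRep k I E s t, ∑ i, M.dimVec i ≤ N → ∃ G ∈ S, M.Iso G := by
  obtain ⟨n, F, hF⟩ := h
  induction N with
  | zero =>
    refine ⟨{zero k I E s t}, Set.finite_singleton _, fun M hM => ⟨_, rfl, ?_⟩⟩
    by_contra hne
    have := sum_dimVec_pos fun htriv => hne htriv.iso_zero
    omega
  | succ N ih =>
    obtain ⟨S, hS, hSM⟩ := ih
    refine ⟨{zero k I E s t} ∪ Set.range F ∪ Set.image2 QRep.dsum S S,
      ((Set.finite_singleton _).union (Set.finite_range F)).union (hS.image2 _ hS), fun M hM => ?_⟩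
    by_cases htriv : M.IsTrivial
    · exact ⟨_, Or.inl (Or.inl rfl), htriv.iso_zero⟩
    by_cases hindec : M.Indecomposable
    · obtain ⟨a, ha⟩ := hF M hindec
      exact ⟨F a, Or.inl (Or.inr ⟨a, rfl⟩), ha⟩
    obtain ⟨A, B, hA, hB, hAB⟩ : ∃ A B : QRep k I E s t,
        ¬ A.IsTrivial ∧ ¬ B.IsTrivial ∧ M.Iso (A.dsum B) := by
      by_contra! hcon
      exact hindec ⟨htriv, hcon⟩
    have hsum : ∑ i, M.dimVec i = ∑ i, A.dimVec i + ∑ i, B.dimVec i := by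
      rw [hAB.dimVec_eq, dimVec_dsum, ← Finset.sum_add_distrib]
      rfl
    have hApos := sum_dimVec_pos hA
    have hBpos := sum_dimVec_pos hB
    obtain ⟨G, hG, hAG⟩ := hSM A (by omega)
    obtain ⟨G', hG', hBG⟩ := hSM B (by omega)
    exact ⟨_, Or.inr ⟨G, hG, G', hG', rfl⟩, hAB.trans (hAG.dsum hBG)⟩

/-- The representation with coordinate spaces `k ^ (d i)` at the vertices in which the arrow `e`
acts as the matrix `y e`; the families `y` form the representation variety of dimension vector
`d`. -/
def matrixRep (d : I → ℕ) (y : ∀ e : E, Matrix (Fin (d (t e))) (Fin (d (s e))) k) :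
    QRep k I E s t where
  V i := Fin (d i) → k
  f e := Matrix.toLin' (y e)

theorem exists_mul_eq_mul_of_matrixRep_iso {d : I → ℕ}
    {y y' : ∀ e : E, Matrix (Fin (d (t e))) (Fin (d (s e))) k}
    (h : (matrixRep d y).Iso (matrixRep d y')) :
    ∃ g : ∀ i, Matrix (Fin (d i)) (Fin (d i)) k,
      (∀ i, (g i).det ≠ 0) ∧ ∀ e, g (t e) * y e = y' e * g (s e) := by
  obtain ⟨φ, hφ⟩ : ∃ φ : ∀ i, (Fin (d i) → k) ≃ₗ[k] (Fin (d i) → k),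
    ∀ e v, φ (t e) (Matrix.toLin' (y e) v) = Matrix.toLin' (y' e) (φ (s e) v) := h
  refine ⟨fun i => LinearMap.toMatrix' (φ i).toLinearMap, fun i => ?_, fun e => ?_⟩
  · rw [LinearMap.det_toMatrix']
    exact (φ i).isUnit_det'.ne_zero
  · apply Matrix.toLin'.injective
    rw [Matrix.toLin'_mul, Matrix.toLin'_mul, Matrix.toLin'_toMatrix', Matrix.toLin'_toMatrix']
    exact LinearMap.ext (hφ e)

open Classical in
/-- The generic element of `∏ i, GL (d i)`, normalised to have entry `1` in position `p₀`. The
normalisation spends the scalars, which act trivially on the representation variety. -/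
noncomputable def normalizedGenericMatrix (k : Type) [Field k] {d : I → ℕ}
    (p₀ : Σ i : I, Fin (d i) × Fin (d i)) (i : I) :
    Matrix (Fin (d i)) (Fin (d i))
      (MvPolynomial {p : Σ i : I, Fin (d i) × Fin (d i) // p ≠ p₀} k) :=
  Matrix.of fun a b =>
    if h : (⟨i, (a, b)⟩ : Σ i : I, Fin (d i) × Fin (d i)) = p₀ then 1 else MvPolynomial.X ⟨_, h⟩

open MvPolynomial

theorem map_eval_normalizedGenericMatrix {d : I → ℕ} {p₀ : Σ i : I, Fin (d i) × Fin (d i)}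
    {g : ∀ i, Matrix (Fin (d i)) (Fin (d i)) k} (hg : g p₀.1 p₀.2.1 p₀.2.2 = 1) (i : I) :
    (normalizedGenericMatrix k p₀ i).map (eval fun p => g p.1.1 p.1.2.1 p.1.2.2) = g i := by
  ext a b
  simp only [normalizedGenericMatrix, Matrix.map_apply, Matrix.of_apply]
  split_ifs with h
  · subst h
    simpa using hg.symm
  · exact eval_X _

variable [Fintype I] [Fintype E] {d : I → ℕ}

theorem card_ne_lt_card_of_titsForm_nonpos (hd : titsForm s t d ≤ 0)
    (p₀ : Σ i : I, Fin (d i) × Fin (d i)) [Fintype {p // p ≠ p₀}] :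
    Fintype.card {p // p ≠ p₀} < Fintype.card (Σ e : E, Fin (d (t e)) × Fin (d (s e))) := by
  refine (Fintype.card_subtype_lt (x := p₀) (not_not.2 rfl)).trans_le ?_
  have htits : titsForm s t d = (∑ i, d i * d i : ℕ) - (∑ e, d (t e) * d (s e) : ℕ) := by
    simp [titsForm, sq, mul_comm]
  simp only [Fintype.card_sigma, Fintype.card_prod, Fintype.card_fin]
  omega

theorem exists_eval_eq_zero_of_normalized (hd : titsForm s t d ≤ 0)
    (y₀ : ∀ e : E, Matrix (Fin (d (t e))) (Fin (d (s e))) k)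
    (p₀ : Σ i : I, Fin (d i) × Fin (d i)) :
    ∃ P : MvPolynomial (Σ e : E, Fin (d (t e)) × Fin (d (s e))) k, P ≠ 0 ∧
      ∀ (g : ∀ i, Matrix (Fin (d i)) (Fin (d i)) k)
        (y : ∀ e : E, Matrix (Fin (d (t e))) (Fin (d (s e))) k), (∀ i, (g i).det ≠ 0) →
        g p₀.1 p₀.2.1 p₀.2.2 = 1 → (∀ e, g (t e) * y e = y₀ e * g (s e)) →
        eval (fun r : Σ e : E, Fin (d (t e)) × Fin (d (s e)) => y r.1 r.2.1 r.2.2) P = 0 := by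
  classical
  let G := normalizedGenericMatrix k p₀
  let y₀C := fun e => (y₀ e).map (C (σ := {p // p ≠ p₀}))
  let Y := fun e => (G (t e)).adjugate * (y₀C e * G (s e))
  obtain ⟨P, hP0, hP⟩ := exists_eval_div_eq_zero_of_card_lt
    (card_ne_lt_card_of_titsForm_nonpos hd p₀)
    (fun r => Y r.1 r.2.1 r.2.2) (fun r => (G (t r.1)).det)
  refine ⟨P, hP0, fun g y hdet hg hgy => ?_⟩
  let x := fun p : {p : Σ i : I, Fin (d i) × Fin (d i) // p ≠ p₀} => g p.1.1 p.1.2.1 p.1.2.2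
  have hG : ∀ i, (G i).map (eval x) = g i := map_eval_normalizedGenericMatrix hg
  have hGdet : ∀ i, eval x (G i).det = (g i).det := fun i => by
    rw [RingHom.map_det, RingHom.mapMatrix_apply, hG]
  have hY : ∀ e, (Y e).map (eval x) = (g (t e)).det • y e := fun e => by
    have hC : (y₀C e).map (eval x) = y₀ e := by ext; simp [y₀C]
    simp only [Y]
    rw [Matrix.map_mul, Matrix.map_mul, ← RingHom.mapMatrix_apply, RingHom.map_adjugate,
      RingHom.mapMatrix_apply, hG, hG, hC, ← hgy e, ← Matrix.mul_assoc,
      Matrix.adjugate_mul, Matrix.smul_mul, Matrix.one_mul]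
  convert hP x fun r => (hGdet _).trans_ne (hdet _) using 3
  funext r
  rw [hGdet, eq_div_iff (hdet _), mul_comm]
  exact (congrFun₂ (hY r.1) r.2.1 r.2.2).symm

theorem exists_eval_eq_zero_of_matrixRep_iso_matrixRep (hd : titsForm s t d ≤ 0) (hd0 : d ≠ 0)
    (y₀ : ∀ e : E, Matrix (Fin (d (t e))) (Fin (d (s e))) k) :
    ∃ P : MvPolynomial (Σ e : E, Fin (d (t e)) × Fin (d (s e))) k, P ≠ 0 ∧
      ∀ y : ∀ e : E, Matrix (Fin (d (t e))) (Fin (d (s e))) k,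
        (matrixRep d y).Iso (matrixRep d y₀) →
        eval (fun r : Σ e : E, Fin (d (t e)) × Fin (d (s e)) => y r.1 r.2.1 r.2.2) P = 0 := by
  choose P hP0 hP using fun p₀ => exists_eval_eq_zero_of_normalized hd y₀ p₀
  refine ⟨∏ p₀, P p₀, Finset.prod_ne_zero_iff.2 fun p₀ _ => hP0 p₀, fun y hy => ?_⟩
  obtain ⟨g, hdet, hgy⟩ := exists_mul_eq_mul_of_matrixRep_iso hy
  obtain ⟨i, hi⟩ := Function.ne_iff.1 hd0
  have : Nonempty (Fin (d i)) := ⟨⟨0, Nat.pos_of_ne_zero hi⟩⟩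
  obtain ⟨a, b, hab⟩ : ∃ a b, g i a b ≠ 0 := by
    by_contra! hzero
    exact hdet i (by rw [show g i = 0 from Matrix.ext hzero, Matrix.det_zero])
  rw [map_prod]
  refine Finset.prod_eq_zero (Finset.mem_univ ⟨i, (a, b)⟩)
    (hP _ (fun j => (g i a b)⁻¹ • g j) y (fun j => ?_) (inv_mul_cancel₀ hab) fun e => ?_)
  · rw [Matrix.det_smul]
    exact mul_ne_zero (pow_ne_zero _ (inv_ne_zero hab)) (hdet j)
  · rw [Matrix.smul_mul, Matrix.mul_smul, hgy]

theorem exists_eval_eq_zero_of_matrixRep_iso (hd : titsForm s t d ≤ 0) (hd0 : d ≠ 0)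
    (M : QRep k I E s t) :
    ∃ P : MvPolynomial (Σ e : E, Fin (d (t e)) × Fin (d (s e))) k, P ≠ 0 ∧
      ∀ y : ∀ e : E, Matrix (Fin (d (t e))) (Fin (d (s e))) k, (matrixRep d y).Iso M →
        eval (fun r : Σ e : E, Fin (d (t e)) × Fin (d (s e)) => y r.1 r.2.1 r.2.2) P = 0 := by
  by_cases hM : ∃ y₀, (matrixRep d y₀).Iso M
  · obtain ⟨y₀, hy₀⟩ := hM
    obtain ⟨P, hP0, hP⟩ := exists_eval_eq_zero_of_matrixRep_iso_matrixRep hd hd0 y₀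
    exact ⟨P, hP0, fun y hy => hP y (hy.trans hy₀.symm)⟩
  · exact ⟨1, one_ne_zero, fun y hy => absurd ⟨y, hy⟩ hM⟩

theorem titsForm_pos_of_finiteRepType [Infinite k] (h : FiniteRepType k I E s t) (hd0 : d ≠ 0) :
    0 < titsForm s t d := by
  by_contra! hd
  obtain ⟨S, hS, hSM⟩ := exists_finite_forall_sum_dimVec_le_iso h (∑ i, d i)
  choose P hP0 hP using exists_eval_eq_zero_of_matrixRep_iso (k := k) hd hd0
  have hprod : ∏ M ∈ hS.toFinset, P M ≠ 0 := Finset.prod_ne_zero_iff.2 fun M _ => hP0 M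
  obtain ⟨x, hx⟩ : ∃ x, eval x (∏ M ∈ hS.toFinset, P M) ≠ 0 := by
    by_contra! hzero
    exact hprod (MvPolynomial.funext (by simpa using hzero))
  let y : ∀ e : E, Matrix (Fin (d (t e))) (Fin (d (s e))) k := fun e => Matrix.of fun a b =>
    x ⟨e, (a, b)⟩
  have hdim : (matrixRep (k := k) d y).dimVec = d := funext fun i => Module.finrank_fin_fun k
  obtain ⟨M, hM, hyM⟩ := hSM (matrixRep d y) (by rw [hdim])
  rw [map_prod] at hx
  exact Finset.prod_ne_zero_iff.1 hx M (hS.mem_toFinset.2 hM) (hP M y hyM)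

end QRep

/-! ### The quadratic form of a multigraph -/

/-- The quadratic form of the generalised Cartan matrix `2 - c` of the multigraph with edge
multiplicities `c`. For a loopless graph it is twice the Tits form. -/
def cartanForm {α : Type} [Fintype α] (c : α → α → ℕ) (x : α → ℤ) : ℤ :=
  2 * ∑ i, x i ^ 2 - ∑ i, ∑ j, (c i j : ℤ) * (x i * x j)

/-- The Cartan form bounds the square of every coordinate up to a constant. This makes it positive
definite and leaves finitely many integral vectors below any given value. -/
def CartanCoercive {α : Type} [Fintype α] (c : α → α → ℕ) : Prop :=
  ∃ C : ℤ, 0 < C ∧ ∀ (x : α → ℤ) (i : α), x i ^ 2 ≤ C * cartanForm c x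

/-- The path `0 — 1 — ⋯ — m` with the extra vertex `m + 1` attached to the vertex `p`; for `p = 1`
and `p = 2` these are the graphs `D_{m+2}` and `E_{m+2}`. -/
def branchCount (m p i j : ℕ) : ℕ := segCount m i j + edgeInd p (m + 1) i j

section

variable {α β γ : Type}

theorem IsGraphIso.trans {c : α → α → ℕ} {d : β → β → ℕ} {g : γ → γ → ℕ}
    (h : IsGraphIso c d) (h' : IsGraphIso d g) : IsGraphIso c g := by
  obtain ⟨e, he⟩ := h
  obtain ⟨e', he'⟩ := h'
  exact ⟨e.trans e', fun i j => (he i j).trans (he' _ _)⟩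

theorem IsGraphIso.symm {c : α → α → ℕ} {d : β → β → ℕ} (h : IsGraphIso c d) :
    IsGraphIso d c := by
  obtain ⟨e, he⟩ := h
  exact ⟨e.symm, fun i j => by rw [he, e.apply_symm_apply, e.apply_symm_apply]⟩

theorem IsADE.of_isGraphIso {c : α → α → ℕ} {d : β → β → ℕ} (h : IsADE d)
    (hcd : IsGraphIso c d) : IsADE c := by
  obtain ⟨n, hn, h⟩ | ⟨n, hn, h⟩ | ⟨n, hn, h⟩ := h
  · exact Or.inl ⟨n, hn, hcd.trans h⟩
  · exact Or.inr (Or.inl ⟨n, hn, hcd.trans h⟩)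
  · exact Or.inr (Or.inr ⟨n, hn, hcd.trans h⟩)

theorem IsADE.isDisjUnionADE {c : α → α → ℕ} (h : IsADE c) : IsDisjUnionADE c :=
  ⟨Unit, fun _ => (), fun _ _ _ => rfl, fun _ =>
    h.of_isGraphIso ⟨Equiv.subtypeUnivEquiv fun _ => rfl, fun _ _ => rfl⟩⟩

theorem IsADE.loopless {c : α → α → ℕ} (h : IsADE c) (i : α) : c i i = 0 := by
  obtain ⟨n, -, e, h⟩ | ⟨n, hn, e, h⟩ | ⟨n, hn, e, h⟩ := h <;> rw [h]
  · simp [aCount, segCount]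
  · simp only [dCount, segCount, edgeInd]
    split_ifs <;> omega
  · simp only [eCount, segCount, edgeInd]
    split_ifs <;> omega

theorem IsADE.nonempty {c : α → α → ℕ} (h : IsADE c) : Nonempty α := by
  obtain ⟨n, hn, e, -⟩ | ⟨n, hn, e, -⟩ | ⟨n, hn, e, -⟩ := h <;>
  exact ⟨e.symm ⟨0, by omega⟩⟩

theorem IsDisjUnionADE.loopless {c : α → α → ℕ} (h : IsDisjUnionADE c) (i : α) : c i i = 0 := by
  obtain ⟨σ, part, -, h⟩ := h
  exact (h (part i)).loopless ⟨i, rfl⟩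

variable [Fintype α] [Fintype β]

theorem cartanForm_extend (c : β → β → ℕ) {f : α → β} (hf : Function.Injective f) (x : α → ℤ) :
    cartanForm c (Function.extend f x 0) = cartanForm (fun i j => c (f i) (f j)) x := by
  have hzero : ∀ b ∉ Set.range f, Function.extend f x 0 b = 0 := fun b hb =>
    Function.extend_apply' _ _ _ hb
  unfold cartanForm
  rw [Fintype.sum_of_injective f hf (fun i => x i ^ 2) (fun b => Function.extend f x 0 b ^ 2)
      (fun b hb => by simp [hzero b hb]) (fun i => by rw [hf.extend_apply]),
    Fintype.sum_of_injective f hf _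
      (fun b => ∑ b', (c b b' : ℤ) * (Function.extend f x 0 b * Function.extend f x 0 b'))
      (fun b hb => by simp [hzero b hb]) fun i =>
        Fintype.sum_of_injective f hf _ _ (fun b hb => by simp [hzero b hb])
          fun j => by rw [hf.extend_apply, hf.extend_apply]]

theorem CartanCoercive.comp_injective {c : β → β → ℕ} (h : CartanCoercive c) {f : α → β}
    (hf : Function.Injective f) : CartanCoercive (fun i j => c (f i) (f j)) := by
  obtain ⟨C, hC, h⟩ := h
  refine ⟨C, hC, fun x i => ?_⟩
  have := h (Function.extend f x 0) (f i)
  rwa [cartanForm_extend c hf, hf.extend_apply] at this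

theorem CartanCoercive.of_isGraphIso {c : α → α → ℕ} {d : β → β → ℕ} (h : CartanCoercive d)
    (hcd : IsGraphIso c d) : CartanCoercive c := by
  obtain ⟨e, he⟩ := hcd
  rw [show c = fun i j => d (e i) (e j) from funext₂ he]
  exact h.comp_injective e.injective

theorem CartanCoercive.cartanForm_nonneg {c : α → α → ℕ} (h : CartanCoercive c) (x : α → ℤ) :
    0 ≤ cartanForm c x := by
  obtain ⟨C, hC, h⟩ := h
  rcases isEmpty_or_nonempty α with _ | ⟨⟨i⟩⟩
  · simp [cartanForm]
  · exact nonneg_of_mul_nonneg_right ((sq_nonneg (x i)).trans (h x i)) hC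

theorem cartanForm_eq_sum_fibers {σ : Type} [Fintype σ] [DecidableEq σ] {c : α → α → ℕ}
    {part : α → σ} (hpart : ∀ i j, c i j ≠ 0 → part i = part j) (x : α → ℤ) :
    cartanForm c x =
      ∑ a, cartanForm (fun i j : {i : α // part i = a} => c i.1 j.1) (fun i => x i.1) := by
  unfold cartanForm
  rw [Finset.mul_sum, ← Finset.sum_sub_distrib, ← (Equiv.sigmaFiberEquiv part).sum_comp,
    Fintype.sum_sigma]
  refine Finset.sum_congr rfl fun a _ => ?_
  rw [Finset.mul_sum, ← Finset.sum_sub_distrib]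
  refine Finset.sum_congr rfl fun i _ => congrArg _ ?_
  rw [← Finset.sum_filter_of_ne (p := fun j => part j = a)]
  · exact Finset.sum_subtype _ (by simp) _
  · intro j _ hj
    have hij : c i.1 j ≠ 0 := fun h => hj (by simp [h])
    exact (hpart _ _ hij).symm.trans i.2

theorem CartanCoercive.of_fibers {σ : Type} [Finite σ] [DecidableEq σ] {c : α → α → ℕ}
    {part : α → σ} (hpart : ∀ i j, c i j ≠ 0 → part i = part j)
    (h : ∀ a, CartanCoercive (fun i j : {i : α // part i = a} => c i.1 j.1)) :
    CartanCoercive c := by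
  cases nonempty_fintype σ
  have hnonneg := fun a => (h a).cartanForm_nonneg
  choose C hC hbound using h
  refine ⟨∑ a, C a + 1, by linarith [Finset.sum_nonneg fun a (_ : a ∈ Finset.univ) => (hC a).le],
    fun x i => (hbound (part i) (fun j => x j.1) ⟨i, rfl⟩).trans ?_⟩
  refine mul_le_mul ?_ ?_ (hnonneg _ _)
    (by linarith [Finset.sum_nonneg fun a (_ : a ∈ Finset.univ) => (hC a).le])
  · linarith [Finset.single_le_sum (fun a _ => (hC a).le) (Finset.mem_univ (part i))]
  · rw [cartanForm_eq_sum_fibers hpart]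
    exact Finset.single_le_sum
      (f := fun a => cartanForm (fun i j : {i : α // part i = a} => c i.1 j.1) fun i => x i.1)
      (fun a _ => hnonneg a _) (Finset.mem_univ (part i))

end

/-! ### Coercivity of the Dynkin graphs -/

section

variable {N : ℕ} (X : ℕ → ℤ)

theorem sum_segCount_mul {m : ℕ} (hm : m < N) :
    ∑ i : Fin N, ∑ j : Fin N, (segCount m i j : ℤ) * (X i * X j) =
      2 * ∑ i ∈ Finset.range m, X i * X (i + 1) := by
  have hsplit : ∀ i j, (segCount m i j : ℤ) * (X i * X j) =
      (if i + 1 = j ∧ j ≤ m then X i * X j else 0) +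
        (if j + 1 = i ∧ i ≤ m then X j * X i else 0) := by
    intro i j
    unfold segCount
    split_ifs <;> first | omega | (push_cast; ring)
  have hrow : ∀ i, ∑ j : Fin N, (if i + 1 = (j : ℕ) ∧ (j : ℕ) ≤ m then X i * X j else 0) =
      if i < m then X i * X (i + 1) else 0 := by
    intro i
    rw [← Finset.sum_range fun j => if i + 1 = j ∧ j ≤ m then X i * X j else 0]
    simp_rw [ite_and, Finset.sum_ite_eq, Finset.mem_range]
    split_ifs <;> omega
  have hup : ∑ i : Fin N, ∑ j : Fin N,
      (if (i : ℕ) + 1 = (j : ℕ) ∧ (j : ℕ) ≤ m then X i * X j else 0) =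
        ∑ i ∈ Finset.range m, X i * X (i + 1) := by
    simp_rw [hrow]
    rw [← Finset.sum_range fun i => if i < m then X i * X (i + 1) else 0, ← Finset.sum_filter]
    congr 1
    ext i
    simp only [Finset.mem_filter, Finset.mem_range]
    omega
  simp_rw [hsplit, Finset.sum_add_distrib]
  rw [hup, Finset.sum_comm, hup, two_mul]

theorem sum_edgeInd_mul {a b : Fin N} (hab : a ≠ b) :
    ∑ i : Fin N, ∑ j : Fin N, (edgeInd a b i j : ℤ) * (X i * X j) = 2 * (X a * X b) := by
  have hsplit : ∀ i j : Fin N, (edgeInd a b i j : ℤ) * (X i * X j) =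
      (if i = a then (if j = b then X a * X b else 0) else 0) +
        (if i = b then (if j = a then X a * X b else 0) else 0) := by
    intro i j
    simp only [edgeInd, ← Fin.ext_iff]
    split_ifs <;> grind
  simp_rw [hsplit, Finset.sum_add_distrib]
  simp [two_mul]

theorem two_mul_sum_sq_sub_two_mul_sum_mul_succ (m : ℕ) :
    2 * ∑ i ∈ Finset.range (m + 1), X i ^ 2 - 2 * ∑ i ∈ Finset.range m, X i * X (i + 1) =
      X 0 ^ 2 + (∑ i ∈ Finset.range m, (X i - X (i + 1)) ^ 2 + X m ^ 2) := by
  induction m with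
  | zero => simp; ring
  | succ m ih =>
    rw [Finset.sum_range_succ _ (m + 1), Finset.sum_range_succ (fun i => X i * X (i + 1)) m,
      Finset.sum_range_succ (fun i => (X i - X (i + 1)) ^ 2) m]
    linarith

theorem cartanForm_segCount (m : ℕ) :
    cartanForm (fun i j : Fin (m + 1) => segCount m i j) (fun i => X i) =
      X 0 ^ 2 + (∑ i ∈ Finset.range m, (X i - X (i + 1)) ^ 2 + X m ^ 2) := by
  rw [cartanForm, sum_segCount_mul X m.lt_succ_self, ← Finset.sum_range fun i => X i ^ 2,
    two_mul_sum_sq_sub_two_mul_sum_mul_succ]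

theorem cartanForm_branchCount {m p : ℕ} (hp : p ≤ m) :
    cartanForm (fun i j : Fin (m + 2) => branchCount m p i j) (fun i => X i) =
      X 0 ^ 2 + (∑ i ∈ Finset.range m, (X i - X (i + 1)) ^ 2 + X m ^ 2) +
        2 * X (m + 1) * (X (m + 1) - X p) := by
  have hedge := sum_edgeInd_mul X (N := m + 2) (a := ⟨p, by omega⟩) (b := Fin.last (m + 1))
    (Fin.ne_of_val_ne (by simp; omega))
  simp only [Fin.val_last] at hedge
  rw [cartanForm]
  simp_rw [branchCount, Nat.cast_add, add_mul, Finset.sum_add_distrib]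
  rw [hedge, sum_segCount_mul X (by omega), ← two_mul_sum_sq_sub_two_mul_sum_mul_succ,
    ← Finset.sum_range fun i => X i ^ 2, Finset.sum_range_succ _ (m + 1)]
  ring

theorem exists_sq_le_mul_sum_sq_sub (m : ℕ) : ∃ C : ℤ, 0 < C ∧ ∀ X : ℕ → ℤ, ∀ j ≤ m,
    X j ^ 2 ≤ C * (∑ i ∈ Finset.range m, (X i - X (i + 1)) ^ 2 + X m ^ 2) := by
  induction m with
  | zero =>
    refine ⟨1, one_pos, fun X j hj => ?_⟩
    simp [Nat.le_zero.1 hj]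
  | succ m ih =>
    obtain ⟨C, hC, ih⟩ := ih
    refine ⟨2 * C + 2, by omega, fun X j hj => ?_⟩
    rw [Finset.sum_range_succ', add_right_comm, zero_add]
    have hX := ih fun i => X (i + 1)
    set S := ∑ i ∈ Finset.range m, (X (i + 1) - X (i + 1 + 1)) ^ 2 + X (m + 1) ^ 2
    have hS : 0 ≤ S := by positivity
    have hCS : 0 ≤ C * S := by positivity
    have hCd : 0 ≤ C * (X 0 - X 1) ^ 2 := by positivity
    rcases j with _ | j
    · have hX1 : X 1 ^ 2 ≤ C * S := hX 0 (Nat.zero_le m)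
      linarith [sq_nonneg (X 0 - 2 * X 1)]
    · linarith [hX j (by omega), sq_nonneg (X 0 - X 1)]

end

theorem exists_eq_comp_val {N : ℕ} (x : Fin N → ℤ) : ∃ X : ℕ → ℤ, x = fun i : Fin N => X i :=
  (Fin.val_injective.surjective_comp_right x).imp fun _ h => h.symm

theorem cartanCoercive_aCount {n : ℕ} (hn : 1 ≤ n) : CartanCoercive (aCount n) := by
  obtain ⟨m, rfl⟩ := Nat.exists_eq_add_of_le' hn
  obtain ⟨C, hC, hbound⟩ := exists_sq_le_mul_sum_sq_sub m
  refine ⟨C, hC, fun x i => ?_⟩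
  obtain ⟨X, rfl⟩ := exists_eq_comp_val x
  refine (hbound X i (by omega)).trans (mul_le_mul_of_nonneg_left ?_ hC.le)
  exact (le_add_of_nonneg_left (sq_nonneg (X 0))).trans_eq (cartanForm_segCount X m).symm

theorem cartanCoercive_dCount {n : ℕ} (hn : 4 ≤ n) : CartanCoercive (dCount n) := by
  obtain ⟨m, rfl⟩ := Nat.exists_eq_add_of_le' (show 3 ≤ n by omega)
  obtain ⟨C, hC, hbound⟩ := exists_sq_le_mul_sum_sq_sub m
  refine ⟨4 * C + 4, by omega, fun x i => ?_⟩
  obtain ⟨X, rfl⟩ := exists_eq_comp_val x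
  have hform : cartanForm (dCount (m + 3)) (fun i => X i) = _ :=
    cartanForm_branchCount X (p := 1) (m := m + 1) (by omega)
  have hX := hbound fun i => X (i + 1)
  rw [Finset.sum_range_succ', zero_add] at hform
  set S := ∑ i ∈ Finset.range m, (X (i + 1) - X (i + 1 + 1)) ^ 2 + X (m + 1) ^ 2
  set T := cartanForm (dCount (m + 3)) (fun i => X i)
  have hT : 2 * T = (2 * X 0 - X 1) ^ 2 + (2 * X (m + 2) - X 1) ^ 2 + 2 * S := by
    rw [hform]
    ring
  have hX1 : X 1 ^ 2 ≤ C * S := hX 0 (Nat.zero_le m)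
  have hS : 0 ≤ S := by positivity
  have hCS : 0 ≤ C * S := by positivity
  have hST : S ≤ T := by
    linarith [hT, sq_nonneg (2 * X 0 - X 1), sq_nonneg (2 * X (m + 2) - X 1)]
  have hCST : C * S ≤ C * T := mul_le_mul_of_nonneg_left hST hC.le
  obtain hi | hi | ⟨j, hj, hi⟩ : (i : ℕ) = 0 ∨ (i : ℕ) = m + 2 ∨ ∃ j ≤ m, (i : ℕ) = j + 1 := by
    by_cases h : (i : ℕ) = 0
    · exact Or.inl h
    · exact Or.inr (or_iff_not_imp_left.2 fun h' => ⟨i - 1, by omega, by omega⟩)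
  all_goals simp only [hi]
  · linarith [sq_nonneg (2 * X 0 - 2 * X 1), sq_nonneg (2 * X (m + 2) - X 1)]
  · linarith [sq_nonneg (2 * X (m + 2) - 2 * X 1), sq_nonneg (2 * X 0 - X 1)]
  · linarith [hX j hj]

theorem cartanCoercive_eCount_eight : CartanCoercive (eCount 8) := by
  refine ⟨60, by norm_num, fun x i => ?_⟩
  obtain ⟨X, rfl⟩ := exists_eq_comp_val x
  have hform : cartanForm (eCount 8) (fun i => X i) = _ :=
    cartanForm_branchCount X (p := 2) (m := 6) (by omega)
  set T := cartanForm (eCount 8) (fun i => X i)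
  -- Complete squares along each arm, from its free end towards the branch vertex `2`.
  have hT : 60 * T = 30 * (2 * X 7 - X 2) ^ 2 + 30 * (2 * X 0 - X 1) ^ 2 +
      10 * (3 * X 1 - 2 * X 2) ^ 2 + 30 * (2 * X 6 - X 5) ^ 2 + 10 * (3 * X 5 - 2 * X 4) ^ 2 +
      5 * (4 * X 4 - 3 * X 3) ^ 2 + 3 * (5 * X 3 - 4 * X 2) ^ 2 + 2 * X 2 ^ 2 := by
    rw [hform]
    simp only [Finset.sum_range_succ, Finset.sum_range_zero]
    ring
  clear_value T
  clear hform
  have h2 := sq_nonneg (X 2)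
  have h27 := sq_nonneg (2 * X 7 - X 2)
  have h01 := sq_nonneg (2 * X 0 - X 1)
  have h12 := sq_nonneg (3 * X 1 - 2 * X 2)
  have h56 := sq_nonneg (2 * X 6 - X 5)
  have h45 := sq_nonneg (3 * X 5 - 2 * X 4)
  have h34 := sq_nonneg (4 * X 4 - 3 * X 3)
  have h23 := sq_nonneg (5 * X 3 - 4 * X 2)
  have hX7 : X 7 ^ 2 ≤ 30 * T := by linarith [sq_nonneg (X 7 - X 2)]
  have hX1 : X 1 ^ 2 ≤ 30 * T := by linarith [sq_nonneg (3 * X 1 - 4 * X 2)]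
  have hX0 : X 0 ^ 2 ≤ 30 * T := by linarith [sq_nonneg (2 * X 0 - 2 * X 1)]
  have hX3 : X 3 ^ 2 ≤ 42 * T := by linarith [sq_nonneg (5 * X 3 - 8 * X 2)]
  have hX4 : X 4 ^ 2 ≤ 52 * T := by linarith [sq_nonneg (4 * X 4 - 6 * X 3)]
  have hX5 : X 5 ^ 2 ≤ 60 * T := by linarith [sq_nonneg (3 * X 5 - 4 * X 4)]
  have hX6 : X 6 ^ 2 ≤ 60 * T := by linarith [sq_nonneg (2 * X 6 - 2 * X 5)]
  fin_cases i <;> dsimp only <;> linarith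

theorem cartanCoercive_eCount {n : ℕ} (hn : n = 6 ∨ n = 7 ∨ n = 8) :
    CartanCoercive (eCount n) := by
  rcases hn with rfl | rfl | rfl
  · rw [show eCount 6 = fun i j => eCount 8 (![0, 1, 2, 3, 4, 7] i) (![0, 1, 2, 3, 4, 7] j) by
      decide]
    exact cartanCoercive_eCount_eight.comp_injective (by decide)
  · rw [show eCount 7 = fun i j =>
      eCount 8 (![0, 1, 2, 3, 4, 5, 7] i) (![0, 1, 2, 3, 4, 5, 7] j) by decide]
    exact cartanCoercive_eCount_eight.comp_injective (by decide)
  · exact cartanCoercive_eCount_eight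

theorem IsADE.cartanCoercive {α : Type} [Fintype α] {c : α → α → ℕ} (h : IsADE c) :
    CartanCoercive c := by
  obtain ⟨n, hn, h⟩ | ⟨n, hn, h⟩ | ⟨n, hn, h⟩ := h
  · exact (cartanCoercive_aCount hn).of_isGraphIso h
  · exact (cartanCoercive_dCount hn).of_isGraphIso h
  · exact (cartanCoercive_eCount hn).of_isGraphIso h

theorem IsDisjUnionADE.cartanCoercive {α : Type} [Fintype α] {c : α → α → ℕ}
    (h : IsDisjUnionADE c) : CartanCoercive c := by
  classical
  obtain ⟨σ, part, hpart, h⟩ := h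
  have hsurj : Function.Surjective part := fun a =>
    let ⟨i⟩ := (h a).nonempty
    ⟨i.1, i.2⟩
  have : Finite σ := Finite.of_surjective part hsurj
  exact CartanCoercive.of_fibers hpart fun a => (h a).cartanCoercive

/-! ### The underlying graph of a quiver -/

section

variable {I E : Type} (s t : E → I)

theorem quivCount_comm (i j : I) : quivCount s t i j = quivCount s t j i := by
  simp only [quivCount, or_comm]

variable {s t}

theorem quivCount_ne_zero_iff [Finite E] {i j : I} :
    quivCount s t i j ≠ 0 ↔ ∃ e, (s e = i ∧ t e = j) ∨ (s e = j ∧ t e = i) := by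
  rw [quivCount, Nat.card_ne_zero, and_iff_left (Subtype.finite ..), nonempty_subtype]

theorem quivCount_self_eq_zero_iff [Finite E] :
    (∀ i, quivCount s t i i = 0) ↔ ∀ e, s e ≠ t e := by
  simp only [← not_ne_iff (a := quivCount s t _ _), quivCount_ne_zero_iff, or_self, not_exists]
  exact ⟨fun h e he => h (s e) e ⟨rfl, he.symm⟩, fun h i e he => h e (he.1.trans he.2.symm)⟩

variable [Fintype I]

theorem cartanForm_quivCount [Fintype E] (hloop : ∀ e, s e ≠ t e) (d : I → ℕ) :
    cartanForm (quivCount s t) (fun i => (d i : ℤ)) = 2 * titsForm s t d := by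
  classical
  have hcount : ∀ i j, (quivCount s t i j : ℤ) * (d i * d j) =
      ∑ e, ((if i = s e then if j = t e then (d (s e) * d (t e) : ℤ) else 0 else 0) +
        if i = t e then if j = s e then (d (s e) * d (t e) : ℤ) else 0 else 0) := by
    intro i j
    rw [quivCount, Nat.card_eq_fintype_card, Fintype.card_subtype, Finset.card_filter,
      Nat.cast_sum, Finset.sum_mul]
    refine Finset.sum_congr rfl fun e _ => ?_
    have := hloop e
    split_ifs <;> grind
  have hedges : ∑ i, ∑ j, (quivCount s t i j : ℤ) * (d i * d j) =
      2 * ∑ e, (d (s e) * d (t e) : ℤ) := by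
    simp_rw [hcount, Finset.sum_comm (t := (Finset.univ : Finset E)), Finset.sum_add_distrib]
    simp [two_mul]
  rw [cartanForm, hedges, titsForm]
  ring

theorem CartanCoercive.finiteRepType [Finite E] (k : Type) [Field k] [Infinite k]
    (hcoer : CartanCoercive (quivCount s t)) (hloop : ∀ e, s e ≠ t e) :
    FiniteRepType k I E s t := by
  cases nonempty_fintype E
  obtain ⟨C, hC, hbound⟩ := hcoer
  have hsq : ∀ (d : I → ℕ) i, (d i : ℤ) ^ 2 ≤ C * (2 * titsForm s t d) := fun d i =>
    cartanForm_quivCount hloop d ▸ hbound (fun i => d i) i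
  refine QRep.finiteRepType_of_titsForm_pos (fun d hd => ?_) ?_
  · obtain ⟨i, hi⟩ := Function.ne_iff.1 hd
    have hdi : (0 : ℤ) < (d i : ℤ) ^ 2 := pow_pos (by exact_mod_cast Nat.pos_of_ne_zero hi) 2
    linarith [pos_of_mul_pos_right (hdi.trans_le (hsq d i)) hC.le]
  · refine (Set.Finite.pi fun _ : I => Set.finite_Iic (2 * C).toNat).subset fun d hd i _ => ?_
    have hdi := hsq d i
    rw [show titsForm s t d = 1 from hd] at hdi
    have hle : (d i : ℤ) ≤ (d i : ℤ) ^ 2 := Int.le_self_sq _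
    change d i ≤ (2 * C).toNat
    omega

end

/-! ### Weakly positive graphs are Dynkin -/

/-- A loopless multigraph whose Cartan form is positive on nonzero vectors of natural numbers, the
only vectors that occur as dimension vectors. -/
structure WeaklyPositiveGraph {α : Type} [Fintype α] (c : α → α → ℕ) : Prop where
  symm : ∀ i j, c i j = c j i
  loopless : ∀ i, c i i = 0
  cartanForm_pos : ∀ x : α → ℕ, x ≠ 0 → 0 < cartanForm c (fun i => (x i : ℤ))

section

variable {α β : Type} [Fintype α] [Fintype β]

theorem WeaklyPositiveGraph.comp_injective {c : β → β → ℕ} (h : WeaklyPositiveGraph c) {f : α → β}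
    (hf : Function.Injective f) : WeaklyPositiveGraph (fun i j => c (f i) (f j)) where
  symm i j := h.symm _ _
  loopless i := h.loopless _
  cartanForm_pos x hx := by
    have hne : Function.extend f x 0 ≠ 0 := by
      obtain ⟨i, hi⟩ := Function.ne_iff.1 hx
      exact Function.ne_iff.2 ⟨f i, by rwa [hf.extend_apply]⟩
    have hcast : Function.extend f (fun i => (x i : ℤ)) 0 =
        fun b => ((Function.extend f x 0 b : ℕ) : ℤ) := by
      funext b
      simp [Function.apply_extend (Nat.cast : ℕ → ℤ), Function.comp_def, Pi.zero_def]
    rw [← cartanForm_extend c hf, hcast]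
    exact h.cartanForm_pos _ hne

theorem WeaklyPositiveGraph.of_isGraphIso {c : α → α → ℕ} {d : β → β → ℕ}
    (h : WeaklyPositiveGraph d) (hcd : IsGraphIso c d) : WeaklyPositiveGraph c := by
  obtain ⟨e, he⟩ := hcd
  rw [show c = fun i j => d (e i) (e j) from funext₂ he]
  exact h.comp_injective e.injective

theorem cartanForm_comp_equiv (e : α ≃ β) (c : β → β → ℕ) (x : β → ℤ) :
    cartanForm (fun i j => c (e i) (e j)) (fun i => x (e i)) = cartanForm c x := by
  unfold cartanForm
  rw [e.sum_comp fun i => x i ^ 2, e.sum_comp fun i => ∑ j, (c i (e j) : ℤ) * (x i * x (e j))]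
  exact congrArg _ (Finset.sum_congr rfl fun i _ => e.sum_comp fun j => (c i j : ℤ) * (x i * x j))

theorem cartanForm_eq_cartanForm_ne_add [DecidableEq α] {c : α → α → ℕ}
    (hsymm : ∀ i j, c i j = c j i) {v : α} (hv : c v v = 0) (x : α → ℤ) :
    cartanForm c x = cartanForm (fun i j : {i // i ≠ v} => c i j) (fun i => x i) + 2 * x v ^ 2 -
      2 * (x v * ∑ i : {i // i ≠ v}, (c i v : ℤ) * x i) := by
  unfold cartanForm
  simp only [Fintype.sum_eq_add_sum_subtype_ne _ v, hv, fun i : {i // i ≠ v} => hsymm v i,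
    Finset.sum_add_distrib]
  have hcol : ∑ i : {i // i ≠ v}, (c i v : ℤ) * (x i * x v) =
      x v * ∑ i : {i // i ≠ v}, (c i v : ℤ) * x i := by
    rw [Finset.mul_sum]
    exact Finset.sum_congr rfl fun i _ => by ring
  have hrow : ∑ i : {i // i ≠ v}, (c i v : ℤ) * (x v * x i) =
      x v * ∑ i : {i // i ≠ v}, (c i v : ℤ) * x i := by
    rw [Finset.mul_sum]
    exact Finset.sum_congr rfl fun i _ => by ring
  rw [hcol, hrow]
  push_cast
  ring

variable {c : α → α → ℕ}

/-- Evaluate the Cartan form at `R` extended by `1` at `v`. For a Dynkin graph `R` will be its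
highest root. -/
theorem WeaklyPositiveGraph.exists_unique_neighbor [DecidableEq α] (h : WeaklyPositiveGraph c)
    {u v : α} (huv : c u v ≠ 0) {R : {i // i ≠ v} → ℕ} (hpos : ∀ i, R i ≠ 0)
    (hR : cartanForm (fun i j : {i // i ≠ v} => c i j) (fun i => (R i : ℤ)) = 2) :
    ∃ p, R p = 1 ∧ ∀ i : {i // i ≠ v}, c i v = if i = p then 1 else 0 := by
  let p : {i // i ≠ v} := ⟨u, fun he => huv (he ▸ h.loopless u)⟩
  let x : α → ℕ := fun i => if hi : i ≠ v then R ⟨i, hi⟩ else 1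
  have hxv : x v = 1 := by simp [x]
  have hx : ∀ i : {i // i ≠ v}, x i = R i := fun i => dif_pos i.2
  have hform := h.cartanForm_pos x (Function.ne_iff.2 ⟨v, by simp [hxv]⟩)
  rw [cartanForm_eq_cartanForm_ne_add h.symm (h.loopless v)] at hform
  simp only [hx, hxv, hR] at hform
  have hlt : ∑ i : {i // i ≠ v}, c i v * R i < 2 := by
    zify
    push_cast at hform
    linarith
  rw [← Finset.add_sum_erase _ _ (Finset.mem_univ p)] at hlt
  have hp : c p v * R p ≠ 0 := mul_ne_zero huv (hpos p)
  obtain ⟨hcp, hRp⟩ : c p v = 1 ∧ R p = 1 := mul_eq_one.1 (by omega)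
  have hother : ∀ i ∈ Finset.univ.erase p, c i v * R i = 0 :=
    Finset.sum_eq_zero_iff.1 (by omega)
  refine ⟨p, hRp, fun i => ?_⟩
  split_ifs with hi
  · rw [hi, hcp]
  · exact (mul_eq_zero.1 (hother i (by simp [hi]))).resolve_right (hpos i)

end

section

variable {α : Type} {c : α → α → ℕ} {v : α} {n : ℕ} {b : ℕ → ℕ → ℕ}

theorem isGraphIso_add_edgeInd [DecidableEq α] (hsymm : ∀ i j, c i j = c j i) (hv : c v v = 0)
    (hb : ∀ i ≤ n, b i n = 0 ∧ b n i = 0) (e : {i // i ≠ v} ≃ Fin n)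
    (he : ∀ i j : {i // i ≠ v}, c i j = b (e i) (e j)) {p : {i // i ≠ v}}
    (hp : ∀ i : {i // i ≠ v}, c i v = if i = p then 1 else 0) :
    IsGraphIso c (fun i j : Fin (n + 1) => b i j + edgeInd (e p) n i j) := by
  let φ : α ≃ Fin (n + 1) :=
    (Equiv.optionSubtypeNe v).symm.trans (e.optionCongr.trans finSuccEquivLast.symm)
  have hφv : φ v = Fin.last n := by simp [φ]
  have hφ : ∀ i : {i // i ≠ v}, φ i = (e i).castSucc := fun i => by
    simp [φ, Equiv.optionSubtypeNe_symm_of_ne i.2]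
  have hp' : ∀ i : {i // i ≠ v}, c i v = if (e i : ℕ) = e p then 1 else 0 := fun i => by
    simp only [hp, ← Fin.ext_iff, e.injective.eq_iff]
  have hcase : ∀ i, i = v ∨ ∃ j : {i // i ≠ v}, i = j := fun i =>
    or_iff_not_imp_left.2 fun hi => ⟨⟨i, hi⟩, rfl⟩
  have hlt := fun i => (e i).2
  refine ⟨φ, fun i j => ?_⟩
  rcases hcase i with hi | ⟨i, rfl⟩ <;> rcases hcase j with hj | ⟨j, rfl⟩
  · simp only [hi, hj, hφv, hv, Fin.val_last, (hb n le_rfl).1, edgeInd]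
    grind
  · simp only [hi, hφv, hφ, hsymm v, hp', Fin.val_last, Fin.val_castSucc, (hb _ (hlt j).le).2,
      edgeInd]
    grind
  · simp only [hj, hφv, hφ, hp', Fin.val_last, Fin.val_castSucc, (hb _ (hlt i).le).1, edgeInd]
    grind
  · simp only [hφ, he, Fin.val_castSucc, edgeInd]
    grind

theorem WeaklyPositiveGraph.exists_isGraphIso_add_edgeInd [Fintype α]
    (h : WeaklyPositiveGraph c) {u : α} (huv : c u v ≠ 0) (hb : ∀ i ≤ n, b i n = 0 ∧ b n i = 0)
    (hiso : IsGraphIso (fun i j : {i // i ≠ v} => c i j) (fun i j : Fin n => b i j))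
    {R : ℕ → ℕ} (hpos : ∀ i < n, R i ≠ 0)
    (hR : cartanForm (fun i j : Fin n => b i j) (fun i => (R i : ℤ)) = 2) :
    ∃ p < n, R p = 1 ∧ IsGraphIso c (fun i j : Fin (n + 1) => b i j + edgeInd p n i j) := by
  classical
  obtain ⟨e, he⟩ := hiso
  have hRe : cartanForm (fun i j : {i // i ≠ v} => c i j) (fun i => (R (e i) : ℤ)) = 2 := by
    rw [funext₂ he]
    exact (cartanForm_comp_equiv e (fun i j : Fin n => b i j) fun i => (R i : ℤ)).trans hR
  obtain ⟨p, hRp, hp⟩ := h.exists_unique_neighbor huv (fun i => hpos _ (e i).2) hRe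
  exact ⟨e p, (e p).2, hRp, isGraphIso_add_edgeInd h.symm (h.loopless v) hb e he hp⟩

end

section

variable {M N : ℕ} {b b' : ℕ → ℕ → ℕ} (f : ℕ → ℕ)

theorem isGraphIso_fin_of_injOn (hlt : ∀ i < N, f i < N)
    (hinj : ∀ i < N, ∀ j < N, f i = f j → i = j)
    (hf : ∀ i < N, ∀ j < N, b i j = b' (f i) (f j)) :
    IsGraphIso (fun i j : Fin N => b i j) (fun i j : Fin N => b' i j) := by
  let F : Fin N → Fin N := fun i => ⟨f i, hlt i i.2⟩
  have hF : Function.Injective F := fun i j hij =>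
    Fin.ext (hinj i i.2 j j.2 (congrArg Fin.val hij))
  exact ⟨Equiv.ofBijective F (Finite.injective_iff_bijective.1 hF), fun i j => hf i i.2 j j.2⟩

theorem WeaklyPositiveGraph.comp_fin (h : WeaklyPositiveGraph (fun i j : Fin M => b' i j))
    (hlt : ∀ i < N, f i < M) (hinj : ∀ i < N, ∀ j < N, f i = f j → i = j)
    (hf : ∀ i < N, ∀ j < N, b i j = b' (f i) (f j)) :
    WeaklyPositiveGraph (fun i j : Fin N => b i j) := by
  let F : Fin N → Fin M := fun i => ⟨f i, hlt i i.2⟩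
  have hF : Function.Injective F := fun i j hij =>
    Fin.ext (hinj i i.2 j j.2 (congrArg Fin.val hij))
  rw [show (fun i j : Fin N => b i j) = fun i j => b' (F i) (F j) from
    funext₂ fun i j => hf i i.2 j j.2]
  exact h.comp_injective hF

end

-- The extended Dynkin graphs `Ẽ₈` and `Ẽ₇`, tested on their null roots.
theorem not_weaklyPositiveGraph_branchCount_seven_two :
    ¬ WeaklyPositiveGraph (fun i j : Fin 9 => branchCount 7 2 i j) := fun h =>
  absurd (h.cartanForm_pos ![2, 4, 6, 5, 4, 3, 2, 1, 3] (by decide)) (by decide)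

theorem not_weaklyPositiveGraph_branchCount_six_three :
    ¬ WeaklyPositiveGraph (fun i j : Fin 8 => branchCount 6 3 i j) := fun h =>
  absurd (h.cartanForm_pos ![1, 2, 3, 4, 3, 2, 1, 2] (by decide)) (by decide)

section

variable {m p : ℕ}

theorem isGraphIso_branchCount_sub (hp : p ≤ m) :
    IsGraphIso (fun i j : Fin (m + 2) => branchCount m p i j)
      (fun i j : Fin (m + 2) => branchCount m (m - p) i j) := by
  refine isGraphIso_fin_of_injOn (fun i => if i = m + 1 then m + 1 else m - i)
    (fun i hi => ?_) (fun i hi j hj => ?_) fun i hi j hj => ?_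
  · split_ifs <;> omega
  · split_ifs <;> omega
  · simp only [branchCount, segCount, edgeInd]
    grind

theorem isADE_branchCount_zero (m : ℕ) :
    IsADE (fun i j : Fin (m + 2) => branchCount m 0 i j) := by
  refine Or.inl ⟨m + 2, by omega,
    (isGraphIso_branchCount_sub (Nat.zero_le m)).trans ⟨Equiv.refl _, fun i j => ?_⟩⟩
  simp only [branchCount, segCount, edgeInd, aCount, Equiv.refl_apply]
  grind

theorem isADE_branchCount_one (hm : 2 ≤ m) :
    IsADE (fun i j : Fin (m + 2) => branchCount m 1 i j) :=
  Or.inr (Or.inl ⟨m + 2, by omega, Equiv.refl _, fun _ _ => rfl⟩)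

theorem WeaklyPositiveGraph.isADE_branchCount_two (hm : 4 ≤ m)
    (h : WeaklyPositiveGraph (fun i j : Fin (m + 2) => branchCount m 2 i j)) :
    IsADE (fun i j : Fin (m + 2) => branchCount m 2 i j) := by
  by_cases hm' : m ≤ 6
  · exact Or.inr (Or.inr ⟨m + 2, by omega, Equiv.refl _, fun _ _ => rfl⟩)
  · refine absurd (h.comp_fin (fun i => if i = 8 then m + 1 else i) (fun i hi => ?_)
      (fun i hi j hj => ?_) fun i hi j hj => ?_) not_weaklyPositiveGraph_branchCount_seven_two
    · split_ifs <;> omega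
    · split_ifs <;> omega
    · simp only [branchCount, segCount, edgeInd]
      grind

theorem not_weaklyPositiveGraph_branchCount (hp : 3 ≤ p) (hpm : p + 3 ≤ m) :
    ¬ WeaklyPositiveGraph (fun i j : Fin (m + 2) => branchCount m p i j) := fun h => by
  refine not_weaklyPositiveGraph_branchCount_six_three
    (h.comp_fin (fun i => if i = 7 then m + 1 else i + (p - 3)) (fun i hi => ?_)
      (fun i hi j hj => ?_) fun i hi j hj => ?_)
  · split_ifs <;> omega
  · split_ifs <;> omega
  · simp only [branchCount, segCount, edgeInd]
    grind

theorem WeaklyPositiveGraph.isADE_branchCount (hp : p ≤ m)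
    (h : WeaklyPositiveGraph (fun i j : Fin (m + 2) => branchCount m p i j)) :
    IsADE (fun i j : Fin (m + 2) => branchCount m p i j) := by
  wlog hpm : 2 * p ≤ m generalizing p
  · have hrev := isGraphIso_branchCount_sub hp
    exact (this (Nat.sub_le m p) (h.of_isGraphIso hrev.symm) (by omega)).of_isGraphIso hrev
  obtain rfl | rfl | rfl | hp : p = 0 ∨ p = 1 ∨ p = 2 ∨ 3 ≤ p := by omega
  · exact isADE_branchCount_zero m
  · exact isADE_branchCount_one (by omega)
  · exact h.isADE_branchCount_two (by omega)
  · exact absurd h (not_weaklyPositiveGraph_branchCount hp (by omega))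

end

section

variable {α : Type} [Fintype α] {c : α → α → ℕ} {u v : α} {n : ℕ}

theorem WeaklyPositiveGraph.isADE_of_isGraphIso_aCount (h : WeaklyPositiveGraph c)
    (huv : c u v ≠ 0) (hn : 1 ≤ n)
    (hiso : IsGraphIso (fun i j : {i // i ≠ v} => c i j) (aCount n)) : IsADE c := by
  obtain ⟨m, rfl⟩ := Nat.exists_eq_add_of_le' hn
  obtain ⟨p, hp, -, hiso⟩ := h.exists_isGraphIso_add_edgeInd huv (b := segCount m)
    (fun i hi => by simp only [segCount]; grind) hiso (R := fun _ => 1) (fun _ _ => one_ne_zero)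
    ((cartanForm_segCount (fun _ => 1) m).trans (by simp))
  exact ((h.of_isGraphIso hiso.symm).isADE_branchCount (by omega)).of_isGraphIso hiso

theorem isGraphIso_branchCount_one_add_edgeInd_zero (m : ℕ) :
    IsGraphIso (fun i j : Fin (m + 5) => branchCount (m + 2) 1 i j + edgeInd 0 (m + 4) i j)
      (fun i j : Fin (m + 5) => branchCount (m + 3) 2 i j) := by
  refine isGraphIso_fin_of_injOn
    (b := fun i j => branchCount (m + 2) 1 i j + edgeInd 0 (m + 4) i j)
    (fun i => if i = m + 4 then 0 else if i = m + 3 then m + 4 else i + 1)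
    (fun i hi => ?_) (fun i hi j hj => ?_) fun i hi j hj => ?_
  · split_ifs <;> omega
  · grind
  · simp only [branchCount, segCount, edgeInd]
    grind

theorem isGraphIso_branchCount_one_add_edgeInd_end (m : ℕ) :
    IsGraphIso (fun i j : Fin (m + 5) => branchCount (m + 2) 1 i j + edgeInd (m + 2) (m + 4) i j)
      (fun i j : Fin (m + 5) => branchCount (m + 3) 1 i j) := by
  refine isGraphIso_fin_of_injOn
    (b := fun i j => branchCount (m + 2) 1 i j + edgeInd (m + 2) (m + 4) i j)
    (fun i => if i = m + 4 then m + 3 else if i = m + 3 then m + 4 else i)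
    (fun i hi => ?_) (fun i hi j hj => ?_) fun i hi j hj => ?_
  · split_ifs <;> omega
  · grind
  · simp only [branchCount, segCount, edgeInd]
    grind

theorem isGraphIso_branchCount_one_add_edgeInd_branch (m : ℕ) :
    IsGraphIso (fun i j : Fin (m + 5) => branchCount (m + 2) 1 i j + edgeInd (m + 3) (m + 4) i j)
      (fun i j : Fin (m + 5) => branchCount (m + 2) 1 i j + edgeInd 0 (m + 4) i j) := by
  refine isGraphIso_fin_of_injOn
    (b := fun i j => branchCount (m + 2) 1 i j + edgeInd (m + 3) (m + 4) i j)
    (b' := fun i j => branchCount (m + 2) 1 i j + edgeInd 0 (m + 4) i j)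
    (fun i => if i = 0 then m + 3 else if i = m + 3 then 0 else i)
    (fun i hi => ?_) (fun i _ j _ => ?_) fun i hi j hj => ?_
  · split_ifs <;> omega
  · grind
  · simp only [branchCount, segCount, edgeInd]
    grind (splits := 20)

theorem cartanForm_branchCount_one_highestRoot (m : ℕ) :
    cartanForm (fun i j : Fin (m + 4) => branchCount (m + 2) 1 i j)
      (fun i => ((if (i : ℕ) = 0 ∨ (i : ℕ) = m + 2 ∨ (i : ℕ) = m + 3 then 1 else 2 : ℕ) : ℤ)) =
        2 := by
  let X : ℕ → ℤ := fun i => ((if i = 0 ∨ i = m + 2 ∨ i = m + 3 then 1 else 2 : ℕ) : ℤ)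
  have hconst : ∀ i ∈ Finset.range m, (X (i + 1) - X (i + 1 + 1)) ^ 2 = 0 := fun i hi => by
    have := Finset.mem_range.1 hi
    simp only [X]
    rw [if_neg (by omega), if_neg (by omega), sub_self, zero_pow two_ne_zero]
  refine (cartanForm_branchCount X (p := 1) (by omega)).trans ?_
  rw [Finset.sum_range_succ, Finset.sum_range_succ', Finset.sum_eq_zero hconst]
  simp [X]

theorem WeaklyPositiveGraph.isADE_of_isGraphIso_dCount (h : WeaklyPositiveGraph c)
    (huv : c u v ≠ 0) (hn : 4 ≤ n)
    (hiso : IsGraphIso (fun i j : {i // i ≠ v} => c i j) (dCount n)) : IsADE c := by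
  obtain ⟨m, rfl⟩ := Nat.exists_eq_add_of_le' hn
  obtain ⟨p, hp, hRp, hiso⟩ := h.exists_isGraphIso_add_edgeInd huv (b := branchCount (m + 2) 1)
    (fun i hi => by simp only [branchCount, segCount, edgeInd]; grind) hiso
    (R := fun i => if i = 0 ∨ i = m + 2 ∨ i = m + 3 then 1 else 2)
    (fun i _ => by split_ifs <;> simp) (cartanForm_branchCount_one_highestRoot m)
  have hbranch : ∀ {q : ℕ}, q ≤ m + 3 →
      IsGraphIso c (fun i j : Fin (m + 5) => branchCount (m + 3) q i j) → IsADE c := fun hq hc =>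
    ((h.of_isGraphIso hc.symm).isADE_branchCount hq).of_isGraphIso hc
  have hends : p = 0 ∨ p = m + 2 ∨ p = m + 3 := by
    by_contra hne
    simp [hne] at hRp
  have hzero := isGraphIso_branchCount_one_add_edgeInd_zero m
  rcases hends with rfl | rfl | rfl
  · exact hbranch (by omega) (hiso.trans hzero)
  · exact hbranch (by omega) (hiso.trans (isGraphIso_branchCount_one_add_edgeInd_end m))
  · exact hbranch (by omega)
      ((hiso.trans (isGraphIso_branchCount_one_add_edgeInd_branch m)).trans hzero)

theorem WeaklyPositiveGraph.isADE_of_isGraphIso_eCount_six (h : WeaklyPositiveGraph c)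
    (huv : c u v ≠ 0) (hiso : IsGraphIso (fun i j : {i // i ≠ v} => c i j) (eCount 6)) :
    IsADE c := by
  obtain ⟨p, hp, hRp, hiso⟩ := h.exists_isGraphIso_add_edgeInd huv (b := branchCount 4 2)
    (by decide) hiso (R := fun i => [1, 2, 3, 2, 1, 2].getD i 0) (by decide) (by decide)
  refine Or.inr (Or.inr ⟨7, by omega, hiso.trans ?_⟩)
  obtain rfl | rfl : p = 0 ∨ p = 4 := by interval_cases p <;> simp at hRp ⊢
  · exact isGraphIso_fin_of_injOn (b := fun i j => branchCount 4 2 i j + edgeInd 0 6 i j)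
      (b' := branchCount 5 2) (fun i => [4, 3, 2, 1, 0, 6, 5].getD i 0)
      (by decide) (by decide) (by decide)
  · exact isGraphIso_fin_of_injOn (b := fun i j => branchCount 4 2 i j + edgeInd 4 6 i j)
      (b' := branchCount 5 2) (fun i => [0, 1, 2, 3, 4, 6, 5].getD i 0)
      (by decide) (by decide) (by decide)

theorem WeaklyPositiveGraph.isADE_of_isGraphIso_eCount_seven (h : WeaklyPositiveGraph c)
    (huv : c u v ≠ 0) (hiso : IsGraphIso (fun i j : {i // i ≠ v} => c i j) (eCount 7)) :
    IsADE c := by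
  obtain ⟨p, hp, hRp, hiso⟩ := h.exists_isGraphIso_add_edgeInd huv (b := branchCount 5 2)
    (by decide) hiso (R := fun i => [2, 3, 4, 3, 2, 1, 2].getD i 0) (by decide) (by decide)
  obtain rfl : p = 5 := by interval_cases p <;> simp at hRp ⊢
  exact Or.inr (Or.inr ⟨8, by omega, hiso.trans <|
    isGraphIso_fin_of_injOn (b := fun i j => branchCount 5 2 i j + edgeInd 5 7 i j)
      (b' := branchCount 6 2) (fun i => [0, 1, 2, 3, 4, 5, 7, 6].getD i 0)
      (by decide) (by decide) (by decide)⟩)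

theorem WeaklyPositiveGraph.not_isGraphIso_eCount_eight (h : WeaklyPositiveGraph c)
    (huv : c u v ≠ 0) : ¬ IsGraphIso (fun i j : {i // i ≠ v} => c i j) (eCount 8) := fun hiso => by
  obtain ⟨p, hp, hRp, -⟩ := h.exists_isGraphIso_add_edgeInd huv (b := branchCount 6 2)
    (by decide) hiso (R := fun i => [2, 4, 6, 5, 4, 3, 2, 3].getD i 0) (by decide) (by decide)
  interval_cases p <;> simp at hRp

theorem WeaklyPositiveGraph.isADE_of_isADE_ne (h : WeaklyPositiveGraph c) (huv : c u v ≠ 0)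
    (hade : IsADE (fun i j : {i // i ≠ v} => c i j)) : IsADE c := by
  obtain ⟨n, hn, hiso⟩ | ⟨n, hn, hiso⟩ | ⟨n, rfl | rfl | rfl, hiso⟩ := hade
  · exact h.isADE_of_isGraphIso_aCount huv hn hiso
  · exact h.isADE_of_isGraphIso_dCount huv hn hiso
  · exact h.isADE_of_isGraphIso_eCount_six huv hiso
  · exact h.isADE_of_isGraphIso_eCount_seven huv hiso
  · exact absurd hiso (h.not_isGraphIso_eCount_eight huv)

end

/-- The simple graph joining distinct vertices of positive multiplicity. It gives access to
connectedness and connected components. -/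
def supportGraph {α : Type} (c : α → α → ℕ) : SimpleGraph α :=
  SimpleGraph.fromRel fun i j => c i j ≠ 0

section

variable {α : Type} {c : α → α → ℕ}

theorem supportGraph_adj_iff (hsymm : ∀ i j, c i j = c j i) (hloop : ∀ i, c i i = 0) {i j : α} :
    (supportGraph c).Adj i j ↔ c i j ≠ 0 := by
  rw [supportGraph, SimpleGraph.fromRel_adj, hsymm j i, or_self, and_iff_right_iff_imp]
  rintro hij rfl
  exact hij (hloop i)

theorem supportGraph_induce (S : Set α) :
    (supportGraph c).induce S = supportGraph (fun i j : S => c i j) := by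
  ext i j
  simp [supportGraph, Subtype.ext_iff]

variable [Fintype α]

theorem WeaklyPositiveGraph.isADE_of_connected (h : WeaklyPositiveGraph c)
    (hconn : (supportGraph c).Connected) : IsADE c := by
  classical
  induction hcard : Fintype.card α generalizing α with
  | zero => exact absurd hcard (Fintype.card_pos_iff.2 hconn.nonempty).ne'
  | succ n ih =>
    rcases subsingleton_or_nontrivial α with hα | hα
    · have hcard' : Fintype.card α = 1 :=
        (Fintype.card_le_one_iff_subsingleton.2 hα).antisymm (by omega)
      refine Or.inl ⟨1, le_rfl, Fintype.equivFinOfCardEq hcard', fun i j => ?_⟩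
      rw [Subsingleton.elim i j, h.loopless]
      simp [aCount, segCount]
    · obtain ⟨v, hv⟩ := hconn.exists_connected_induce_compl_singleton_of_finite_nontrivial
      obtain ⟨u, hu⟩ := hconn.preconnected.exists_adj_of_nontrivial v
      rw [supportGraph_adj_iff h.symm h.loopless, h.symm] at hu
      rw [supportGraph_induce] at hv
      refine h.isADE_of_isADE_ne hu ?_
      exact ih (h.comp_injective Subtype.val_injective) hv (by simp [hcard])

theorem WeaklyPositiveGraph.isDisjUnionADE (h : WeaklyPositiveGraph c) : IsDisjUnionADE c := by
  classical
  refine ⟨(supportGraph c).ConnectedComponent, (supportGraph c).connectedComponentMk,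
    fun i j hij => ?_, fun C => ?_⟩
  · exact SimpleGraph.ConnectedComponent.sound
      ((supportGraph_adj_iff h.symm h.loopless).2 hij).reachable
  · refine (h.comp_injective Subtype.val_injective).isADE_of_connected ?_
    exact supportGraph_induce C.supp ▸ C.connected_toSimpleGraph

end

/-! ### Gabriel's theorem -/

theorem QuivConnected.connected_supportGraph {I E : Type} [Finite E] {s t : E → I}
    (h : QuivConnected I E s t) : (supportGraph (quivCount s t)).Connected := by
  have := h.1
  refine ⟨fun i j => ?_⟩
  have hij := h.2 i j
  induction hij with
  | refl => exact SimpleGraph.Reachable.refl _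
  | @tail a b _ hab ih =>
    by_cases hne : a = b
    · exact hne ▸ ih
    · exact ih.trans (SimpleGraph.Adj.reachable ⟨hne, Or.inl (quivCount_ne_zero_iff.2 hab)⟩)

section

variable {I E : Type} [Fintype I] [Fintype E] {s t : E → I}

theorem source_ne_target_of_titsForm_pos
    (hpos : ∀ d : I → ℕ, d ≠ 0 → 0 < titsForm s t d) (e : E) : s e ≠ t e := by
  classical
  intro he
  set d : I → ℕ := Pi.single (s e) 1
  have hvertices : ∑ i, (d i : ℤ) ^ 2 = 1 := by
    rw [Finset.sum_eq_single (s e)] <;> simp +contextual [d]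
  have harrows : (1 : ℤ) ≤ ∑ e, (d (s e) : ℤ) * d (t e) := by
    have hle := Finset.single_le_sum (f := fun e => (d (s e) : ℤ) * d (t e))
      (fun _ _ => by positivity) (Finset.mem_univ e)
    simpa [d, ← he] using hle
  have := hpos d (by simp [d])
  rw [titsForm] at this
  omega

theorem weaklyPositiveGraph_quivCount_of_titsForm_pos
    (hpos : ∀ d : I → ℕ, d ≠ 0 → 0 < titsForm s t d) :
    WeaklyPositiveGraph (quivCount s t) where
  symm := quivCount_comm s t
  loopless := quivCount_self_eq_zero_iff.2 (source_ne_target_of_titsForm_pos hpos)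
  cartanForm_pos d hd := by
    rw [cartanForm_quivCount (source_ne_target_of_titsForm_pos hpos)]
    exact mul_pos two_pos (hpos d hd)

end

theorem stmt9_general (k : Type) [Field k] [Infinite k] (I E : Type) [Finite I] [Finite E]
    (s t : E → I) :
    (QuivConnected I E s t →
      (FiniteRepType k I E s t ↔ IsADE (quivCount s t))) ∧
    (FiniteRepType k I E s t ↔ IsDisjUnionADE (quivCount s t)) := by
  cases nonempty_fintype I
  cases nonempty_fintype E
  have hgraph (h : FiniteRepType k I E s t) : WeaklyPositiveGraph (quivCount s t) :=
    weaklyPositiveGraph_quivCount_of_titsForm_pos fun _ => QRep.titsForm_pos_of_finiteRepType h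
  have hfinite (h : IsDisjUnionADE (quivCount s t)) : FiniteRepType k I E s t :=
    h.cartanCoercive.finiteRepType k (quivCount_self_eq_zero_iff.1 h.loopless)
  exact ⟨fun hconn => ⟨fun h => (hgraph h).isADE_of_connected hconn.connected_supportGraph,
    fun h => hfinite h.isDisjUnionADE⟩, fun h => (hgraph h).isDisjUnionADE, hfinite⟩

theorem stmt9 (k : Type) [Field k] [IsAlgClosed k] (I E : Type) [Fintype I] [Fintype E]
    (s t : E → I) :
    (QuivConnected I E s t →
      (FiniteRepType k I E s t ↔ IsADE (quivCount s t))) ∧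
    (FiniteRepType k I E s t ↔ IsDisjUnionADE (quivCount s t)) :=
  have : Infinite k := IsAlgClosed.instInfinite
  stmt9_general k I E s t
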